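/- arXiv:1601.04032 — 3 statements merged into one kernel-verified Lean document; each statement's English description precedes it below -/
import Mathlib

section
/- Let α, β ∈ ℂ, let ρ ∈ ℂ satisfy ρ³ = 1, let U ⊆ ℂ be a nonempty connected open set, and let p, q be holomorphic on U and satisfy p′(z) = −q(z)² − z·p(z) − α and q′(z) = p(z)² + z·q(z) + β on U. Suppose ρ²·p(z) + ρ·q(z) − z = 0 for all z ∈ U. Then β = ρ·α + ρ² (equivalently ρ²·α − ρ·β + 1 = 0), p satisfies the Riccati equation p′(z) = −α − ρ·z² + z·p(z) − ρ²·p(z)² on U, and the Hamiltonian satisfies H(z) = (1/3)(p(z)³ + q(z)³) + z·p(z)·q(z) + β·p(z) + α·q(z) = z³/3 + ρ²·α·z + ρ²·p(z) on U. -/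
/-- (Part of Theorem FK.) If a holomorphic solution `(p, q)` of the
Hamiltonian system on a nonempty connected open set `U` satisfies `ρ²p + ρq − z ≡ 0`
(`ρ³ = 1`), then `β = ρα + ρ²`, `p` solves the Riccati equation
`p′ = −α − ρz² + zp − ρ²p²`, and the Hamiltonian equals `z³/3 + ρ²αz + ρ²p`. -/
theorem stmt_15 (α β ρ : ℂ) (hρ : ρ ^ 3 = 1) (U : Set ℂ) (hU : IsOpen U)
    (hconn : IsConnected U) (p q : ℂ → ℂ)
    (hp : DifferentiableOn ℂ p U) (hq : DifferentiableOn ℂ q U)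
    (hp' : ∀ z ∈ U, deriv p z = -(q z) ^ 2 - z * p z - α)
    (hq' : ∀ z ∈ U, deriv q z = (p z) ^ 2 + z * q z + β)
    (hrel : ∀ z ∈ U, ρ ^ 2 * p z + ρ * q z - z = 0) :
    β = ρ * α + ρ ^ 2 ∧
    (∀ z ∈ U, deriv p z = -α - ρ * z ^ 2 + z * p z - ρ ^ 2 * (p z) ^ 2) ∧
    (∀ z ∈ U, (1/3 : ℂ) * ((p z) ^ 3 + (q z) ^ 3) + z * p z * q z + β * p z + α * q z
      = z ^ 3 / 3 + ρ ^ 2 * α * z + ρ ^ 2 * p z) := by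
  have hqe : ∀ z ∈ U, q z = ρ ^ 2 * z - ρ * p z := by
    intro z hz
    linear_combination ρ ^ 2 * hrel z hz - (ρ * p z + q z) * hρ
  have hric : ∀ z ∈ U, deriv p z = -α - ρ * z ^ 2 + z * p z - ρ ^ 2 * (p z) ^ 2 := by
    intro z hz
    rw [hp' z hz, hqe z hz]
    linear_combination (-ρ * z ^ 2 + 2 * z * p z) * hρ
  have hβ : β = ρ * α + ρ ^ 2 := by
    obtain ⟨z, hz⟩ := hconn.nonempty
    have hn := hU.mem_nhds hz
    have hpd := (hp.differentiableAt hn).hasDerivAt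
    have h1 : HasDerivAt (fun w => ρ ^ 2 * w - ρ * p w) (ρ ^ 2 * 1 - ρ * deriv p z) z :=
      ((hasDerivAt_id z).const_mul (ρ ^ 2)).sub (hpd.const_mul ρ)
    have h2 : q =ᶠ[nhds z] (fun w => ρ ^ 2 * w - ρ * p w) := by
      filter_upwards [hn] with w hw using hqe w hw
    have h3 := h2.deriv_eq
    rw [h1.deriv, hq' z hz, hric z hz, hqe z hz] at h3
    linear_combination h3 + (p z) ^ 2 * hρ
  refine ⟨hβ, hric, ?_⟩
  intro z hz
  rw [hqe z hz, hβ]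
  linear_combination ((1/3) * z ^ 3 * (ρ ^ 3 + 1) - ρ ^ 2 * z ^ 2 * p z + ρ * z * (p z) ^ 2
    - (1/3) * (p z) ^ 3) * hρ
end

section
/- Let α ∈ ℂ, let ρ ∈ ℂ satisfy ρ³ = 1, let U ⊆ ℂ be open, and let p be holomorphic on U and satisfy the Riccati equation p′(z) = −α − ρ·z² + z·p(z) − ρ²·p(z)² on U. Define q(z) = ρ²·z − ρ·p(z). Then the pair (p, q) satisfies the Hamiltonian system with parameters (α, ρ·α + ρ²), i.e. p′(z) = −q(z)² − z·p(z) − α and q′(z) = p(z)² + z·q(z) + (ρ·α + ρ²) on U; moreover ρ²·p(z) + ρ·q(z) − z = 0 on U. -/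
/-- (Part of Theorem FK.) If `p` solves the Riccati equation
`p′ = −α − ρz² + zp − ρ²p²` (`ρ³ = 1`) on an open set `U` and `q = ρ²z − ρp`, then `(p, q)`
solves the Hamiltonian system with parameters `(α, ρα + ρ²)`, and `ρ²p + ρq − z ≡ 0`. -/
theorem stmt_16 (α ρ : ℂ) (hρ : ρ ^ 3 = 1) (U : Set ℂ) (hU : IsOpen U) (p : ℂ → ℂ)
    (hp : DifferentiableOn ℂ p U)
    (hric : ∀ z ∈ U, deriv p z = -α - ρ * z ^ 2 + z * p z - ρ ^ 2 * (p z) ^ 2) :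
    (∀ z ∈ U, deriv p z = -(ρ ^ 2 * z - ρ * p z) ^ 2 - z * p z - α) ∧
    (∀ z ∈ U, deriv (fun w => ρ ^ 2 * w - ρ * p w) z =
      (p z) ^ 2 + z * (ρ ^ 2 * z - ρ * p z) + (ρ * α + ρ ^ 2)) ∧
    (∀ z ∈ U, ρ ^ 2 * p z + ρ * (ρ ^ 2 * z - ρ * p z) - z = 0) := by
  refine ⟨fun z hz => ?_, fun z hz => ?_, fun z hz => ?_⟩
  · rw [hric z hz]
    linear_combination (ρ * z ^ 2 - 2 * z * p z) * hρ
  · have h1 : HasDerivAt p (deriv p z) z :=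
      ((hp z hz).differentiableAt (hU.mem_nhds hz)).hasDerivAt
    have h2 : HasDerivAt (fun w => ρ ^ 2 * w - ρ * p w) (ρ ^ 2 * 1 - ρ * deriv p z) z :=
      ((hasDerivAt_id' z).const_mul (ρ ^ 2)).sub (h1.const_mul ρ)
    rw [h2.deriv, hric z hz]
    linear_combination (p z) ^ 2 * hρ
  · linear_combination z * hρ
end

section
/- Let α, β ∈ ℂ and let (p, q) be a transcendental solution on ℂ of the Hamiltonian system with T(r, p) = O(r²). For each cube root of unity ρ let Λ^ρ be the set of poles of p with residue ρ, and suppose that for each such ρ the limit 𝔫^ρ := lim_{r→∞} (4π/(√3·r²))·n(r, Λ^ρ) exists. Let ρ₁, ρ₂, ρ₃ be the three cube roots of unity and assume ρ₁²·α − ρ₁·β + 1 = 0 and 𝔫^{ρ₁} > (𝔫^{ρ₂} + 𝔫^{ρ₃})/2. Then ρ₁²·p(z) + ρ₁·q(z) − z = 0 identically on ℂ. -/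
open Filter Topology Asymptotics

/-- The positive part of the logarithm, `log⁺ x = max 0 (log x)`. -/
noncomputable def logPlus (x : ℝ) : ℝ := max 0 (Real.log x)

/-- The Nevanlinna proximity function
`m(r, f) = (2π)⁻¹ ∫₀^{2π} log⁺ |f(r e^{iθ})| dθ`. -/
noncomputable def proximity (f : ℂ → ℂ) (r : ℝ) : ℝ :=
  (2 * Real.pi)⁻¹ * ∫ θ in (0:ℝ)..(2 * Real.pi),
    logPlus ‖f ((r : ℂ) * Complex.exp ((θ : ℂ) * Complex.I))‖

/-- The multiplicity of `z₀` as a pole of `f`: the least `k` such that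
`(z − z₀)^k · f(z)` has a finite limit at `z₀` (and `0` if there is no such `k`). -/
noncomputable def poleMult (f : ℂ → ℂ) (z₀ : ℂ) : ℕ :=
  sInf {k : ℕ | ∃ c : ℂ, Tendsto (fun z => (z - z₀) ^ k * f z) (𝓝[≠] z₀) (𝓝 c)}

/-- The unintegrated counting function of poles,
`n(t, f) = Σ_{|z| ≤ t} (multiplicity of z as pole of f)`. -/
noncomputable def nPoles (f : ℂ → ℂ) (t : ℝ) : ℝ :=
  ∑ᶠ z ∈ Metric.closedBall (0 : ℂ) t, (poleMult f z : ℝ)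

/-- The integrated counting function of poles,
`N(r, f) = ∫₀^r (n(t,f) − n(0,f))/t dt + n(0,f) log r`. -/
noncomputable def countingN (f : ℂ → ℂ) (r : ℝ) : ℝ :=
  (∫ t in (0:ℝ)..r, (nPoles f t - nPoles f 0) / t) + nPoles f 0 * Real.log r

/-- The Nevanlinna characteristic `T(r, f) = m(r, f) + N(r, f)`. -/
noncomputable def nevT (f : ℂ → ℂ) (r : ℝ) : ℝ := proximity f r + countingN f r

/-- `(p, q)` is a (meromorphic) solution on `ℂ` of the Hamiltonian system
`p′ = −q² − z·p − α`, `q′ = p² + z·q + β`. -/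
def IsHamSolution (α β : ℂ) (p q : ℂ → ℂ) : Prop :=
  MeromorphicOn p Set.univ ∧ MeromorphicOn q Set.univ ∧
    ∀ z : ℂ, AnalyticAt ℂ p z → AnalyticAt ℂ q z →
      deriv p z = -(q z) ^ 2 - z * p z - α ∧ deriv q z = (p z) ^ 2 + z * q z + β

/-- A function is rational if it agrees with a quotient of polynomials away from
finitely many points. -/
def IsRationalFn (f : ℂ → ℂ) : Prop :=
  ∃ P Q : Polynomial ℂ, Q ≠ 0 ∧ ∀ᶠ z in Filter.cofinite, f z = P.eval z / Q.eval z

/-- `z₀` is a pole of `f`: `|f| → ∞` at `z₀`. -/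
def IsPole (f : ℂ → ℂ) (z₀ : ℂ) : Prop :=
  Tendsto (fun z => ‖f z‖) (𝓝[≠] z₀) atTop

/-- `f` has residue `ρ` at a simple pole `z₀`: `(z − z₀)·f(z) → ρ` at `z₀`. -/
def HasResidue (f : ℂ → ℂ) (z₀ ρ : ℂ) : Prop :=
  Tendsto (fun z => (z - z₀) * f z) (𝓝[≠] z₀) (𝓝 ρ)

/-- `n(r, S)`: the number of points of `S` in the closed disc of radius `r`. -/
noncomputable def setCount (S : Set ℂ) (r : ℝ) : ℝ :=
  ((S ∩ Metric.closedBall (0 : ℂ) r).ncard : ℝ)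

/-- The closed sector `{t·e^{iθ} : t > 0, a ≤ θ ≤ b}`. -/
def ClosedSector (a b : ℝ) : Set ℂ :=
  {z | ∃ t θ : ℝ, 0 < t ∧ a ≤ θ ∧ θ ≤ b ∧ z = (t : ℂ) * Complex.exp ((θ : ℂ) * Complex.I)}


lemma half_order {p q φ : ℂ → ℂ} {u c κ : ℂ} (hp : MeromorphicAt p u) (hq : MeromorphicAt q u)
    (hφ : AnalyticAt ℂ φ u) (hc : c ≠ 0)
    (h : ∀ᶠ z in 𝓝[≠] u, deriv p z = c * q z ^ 2 + φ z * p z + κ) {m : ℤ} (hm : m < 0)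
    (hpm : meromorphicOrderAt p u = m) :
    ∃ n : ℤ, meromorphicOrderAt q u = n ∧ 2 * n = m - 1 := by
  have hd : meromorphicOrderAt (deriv p) u = ↑(m - 1) :=
    meromorphicOrderAt_deriv_eq_sub_one (by exact_mod_cast hm.ne) hpm
  set B : ℂ → ℂ := fun z => -(φ z * p z + κ) with hB
  have hφp : (m : WithTop ℤ) ≤ meromorphicOrderAt (φ * p) u := by
    rw [meromorphicOrderAt_mul hφ.meromorphicAt hp, hpm]
    calc (m : WithTop ℤ) = 0 + m := by simp
      _ ≤ _ := by gcongr; exact hφ.meromorphicOrderAt_nonneg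
  have hk : (0 : WithTop ℤ) ≤ meromorphicOrderAt (fun _ : ℂ => κ) u :=
    (analyticAt_const).meromorphicOrderAt_nonneg
  have hBm : MeromorphicAt B u := ((hφ.meromorphicAt.mul hp).add (MeromorphicAt.const κ u)).neg
  have hBo : (m : WithTop ℤ) ≤ meromorphicOrderAt B u := by
    have : B = -(φ * p + fun _ => κ) := by ext z; simp [hB]
    rw [this, ← meromorphicOrderAt_neg]
    refine le_trans ?_ (meromorphicOrderAt_add (hφ.meromorphicAt.mul hp) (MeromorphicAt.const κ u))
    refine le_min hφp (le_trans ?_ hk)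
    exact_mod_cast hm.le
  have hlt : meromorphicOrderAt (deriv p) u < meromorphicOrderAt B u := by
    refine lt_of_lt_of_le ?_ hBo
    rw [hd]; exact_mod_cast (by omega)
  have hsum : meromorphicOrderAt (deriv p + B) u = ↑(m - 1) := by
    rw [meromorphicOrderAt_add_eq_left_of_lt hBm hlt, hd]
  have heq : (deriv p + B) =ᶠ[𝓝[≠] u] (fun _ => c) * (q * q) := by
    filter_upwards [h] with z hz
    simp only [Pi.add_apply, Pi.mul_apply, hz, hB]; ring
  rw [meromorphicOrderAt_congr heq, meromorphicOrderAt_mul (MeromorphicAt.const c u) (hq.mul hq),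
    meromorphicOrderAt_mul hq hq, meromorphicOrderAt_const, if_neg hc, zero_add] at hsum
  have hne : meromorphicOrderAt q u ≠ ⊤ := by
    intro ht; rw [ht, WithTop.top_add] at hsum; exact WithTop.coe_ne_top hsum.symm
  lift meromorphicOrderAt q u to ℤ using hne with n hn
  refine ⟨n, rfl, ?_⟩
  have : n + n = m - 1 := by exact_mod_cast hsum
  omega

lemma simple_pole {p : ℂ → ℂ} {u : ℂ} (hp : MeromorphicAt p u)
    (ho : meromorphicOrderAt p u = ((-1 : ℤ) : WithTop ℤ)) :
    ∃ a : ℂ, a ≠ 0 ∧ HasResidue p u a ∧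
      Tendsto (fun z => (z - u) ^ 2 * deriv p z) (𝓝[≠] u) (𝓝 (-a)) := by
  obtain ⟨g, hg, hg0, hpg⟩ := (meromorphicOrderAt_eq_int_iff hp).1 ho
  refine ⟨g u, hg0, ?_, ?_⟩
  · have : Tendsto g (𝓝[≠] u) (𝓝 (g u)) := hg.continuousAt.tendsto.mono_left nhdsWithin_le_nhds
    refine this.congr' ?_
    filter_upwards [hpg, self_mem_nhdsWithin] with z hz hzu
    have : z - u ≠ 0 := sub_ne_zero.2 hzu
    rw [hz]; simp; field_simp
  · have h1 : Tendsto (fun z => -g z + (z - u) * deriv g z) (𝓝 u) (𝓝 (-g u + (u - u) * deriv g u)) := by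
      have : ContinuousAt (fun z => -g z + (z - u) * deriv g z) u := by
        have := hg.deriv.continuousAt
        have := hg.continuousAt
        fun_prop
      exact this
    simp only [sub_self, zero_mul, add_zero] at h1
    refine (h1.mono_left nhdsWithin_le_nhds).congr' ?_
    filter_upwards [EventuallyEq.nhdsNE_deriv hpg, self_mem_nhdsWithin,
      (hg.eventually_analyticAt.filter_mono nhdsWithin_le_nhds)] with z hz hzu hga
    have hzu' : z - u ≠ 0 := sub_ne_zero.2 hzu
    rw [hz]
    have h2 : HasDerivAt (fun z => (z - u) ^ (-1:ℤ) • g z)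
        ((-1 / (z - u)^2) * g z + (z-u)⁻¹ * deriv g z) z := by
      have h3 : HasDerivAt (fun z : ℂ => (z - u)⁻¹) (-1 / (z - u)^2) z := by
        simpa using ((hasDerivAt_id z).sub_const u).fun_inv hzu'
      have := h3.mul hga.differentiableAt.hasDerivAt
      simpa using! this
    rw [h2.deriv]
    field_simp

lemma pole_structure {α β : ℂ} {p q : ℂ → ℂ} (h : IsHamSolution α β p q) (u : ℂ) :
    (0 ≤ meromorphicOrderAt p u ∧ 0 ≤ meromorphicOrderAt q u) ∨
    (meromorphicOrderAt p u = ((-1 : ℤ) : WithTop ℤ) ∧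
      meromorphicOrderAt q u = ((-1 : ℤ) : WithTop ℤ) ∧
      ∃ a : ℂ, a ^ 3 = 1 ∧ HasResidue p u a ∧ HasResidue q u (-a ^ 2)) := by
  obtain ⟨hp, hq, ode⟩ := h
  have hpu := hp u trivial
  have hqu := hq u trivial
  have hev : ∀ᶠ z in 𝓝[≠] u, deriv p z = -(q z) ^ 2 - z * p z - α ∧
      deriv q z = (p z) ^ 2 + z * q z + β := by
    filter_upwards [hpu.eventually_analyticAt, hqu.eventually_analyticAt] with z h1 h2
    exact ode z h1 h2
  have e1 : ∀ᶠ z in 𝓝[≠] u, deriv p z = (-1) * q z ^ 2 + (-z) * p z + (-α) := by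
    filter_upwards [hev] with z hz; rw [hz.1]; ring
  have e2 : ∀ᶠ z in 𝓝[≠] u, deriv q z = 1 * p z ^ 2 + z * q z + β := by
    filter_upwards [hev] with z hz; rw [hz.2]; ring
  by_cases hreg : 0 ≤ meromorphicOrderAt p u ∧ 0 ≤ meromorphicOrderAt q u
  · exact Or.inl hreg
  right
  have hφ1 : AnalyticAt ℂ (fun z : ℂ => -z) u := by fun_prop
  have hφ2 : AnalyticAt ℂ (fun z : ℂ => z) u := by fun_prop
  have key : meromorphicOrderAt p u = ((-1 : ℤ) : WithTop ℤ) ∧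
      meromorphicOrderAt q u = ((-1 : ℤ) : WithTop ℤ) := by
    rcases lt_or_ge (meromorphicOrderAt p u) 0 with hlt | hge
    · obtain ⟨m, hm⟩ := WithTop.ne_top_iff_exists.1 (hlt.trans_le le_top).ne
      have hm0 : m < 0 := by rw [← hm] at hlt; exact_mod_cast hlt
      obtain ⟨n, hn, hnm⟩ := half_order hpu hqu hφ1 (by norm_num) e1 hm0 hm.symm
      obtain ⟨m', hm', hmn⟩ := half_order hqu hpu hφ2 one_ne_zero e2 (by omega) hn
      have : m = m' := by rw [hm'] at hm; exact_mod_cast hm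
      have hm1 : m = -1 := by omega
      have hn1 : n = -1 := by omega
      exact ⟨by rw [← hm, hm1], by rw [hn, hn1]⟩
    · have hlt : meromorphicOrderAt q u < 0 := by
        by_contra hcon; exact hreg ⟨hge, not_lt.1 hcon⟩
      obtain ⟨n, hn⟩ := WithTop.ne_top_iff_exists.1 (hlt.trans_le le_top).ne
      have hn0 : n < 0 := by rw [← hn] at hlt; exact_mod_cast hlt
      obtain ⟨m, hm, hmn⟩ := half_order hqu hpu hφ2 one_ne_zero e2 hn0 hn.symm
      rw [hm] at hge
      have : (0:ℤ) ≤ m := by exact_mod_cast hge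
      omega
  refine ⟨key.1, key.2, ?_⟩
  obtain ⟨a, ha0, ha, ha'⟩ := simple_pole hpu key.1
  obtain ⟨b, hb0, hb, hb'⟩ := simple_pole hqu key.2
  have hz0 : Tendsto (fun z : ℂ => z - u) (𝓝[≠] u) (𝓝 0) := by
    have : Tendsto (fun z : ℂ => z - u) (𝓝 u) (𝓝 (u - u)) := (continuous_id.sub continuous_const).tendsto u
    rw [sub_self] at this
    exact this.mono_left nhdsWithin_le_nhds
  have hzu : Tendsto (fun z : ℂ => z) (𝓝[≠] u) (𝓝 u) := tendsto_id.mono_left nhdsWithin_le_nhds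
  unfold HasResidue at *
  have l1 : Tendsto (fun z => (z - u) ^ 2 * deriv p z) (𝓝[≠] u)
      (𝓝 (-(b ^ 2) - 0 * u * a - 0 ^ 2 * α)) := by
    have := ((hb.pow 2).neg.sub ((hz0.mul hzu).mul ha)).sub ((hz0.pow 2).mul_const α)
    refine this.congr' ?_
    filter_upwards [hev] with z hz
    rw [hz.1]; ring
  have l2 : Tendsto (fun z => (z - u) ^ 2 * deriv q z) (𝓝[≠] u)
      (𝓝 (a ^ 2 + 0 * u * b + 0 ^ 2 * β)) := by
    have := ((ha.pow 2).add ((hz0.mul hzu).mul hb)).add ((hz0.pow 2).mul_const β)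
    refine this.congr' ?_
    filter_upwards [hev] with z hz
    rw [hz.2]; ring
  have m1 := tendsto_nhds_unique l1 ha'
  have m2 := tendsto_nhds_unique l2 hb'
  have hb2 : b = -a ^ 2 := by linear_combination m2
  refine ⟨a, ?_, ha, hb2 ▸ hb⟩
  have : a * (a ^ 3 - 1) = 0 := by rw [hb2] at m1; linear_combination -m1
  rcases mul_eq_zero.1 this with h | h
  · exact absurd h ha0
  · linear_combination h


structure CoreSol (α β : ℂ) (P Q : ℂ → ℂ) (Λ Λ₁ : Set ℂ) : Prop where
  meroP : Meromorphic P
  meroQ : Meromorphic Q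
  closed : IsClosed Λ
  fin : ∀ r : ℝ, (Λ ∩ Metric.closedBall 0 r).Finite
  sub : Λ₁ ⊆ Λ
  anP : ∀ z ∉ Λ, AnalyticAt ℂ P z
  anQ : ∀ z ∉ Λ, AnalyticAt ℂ Q z
  dP : ∀ z ∉ Λ, deriv P z = -(Q z) ^ 2 - z * P z - α
  dQ : ∀ z ∉ Λ, deriv Q z = (P z) ^ 2 + z * Q z + β
  poleP : ∀ z ∈ Λ, meromorphicOrderAt P z = ((-1 : ℤ) : WithTop ℤ)
  res1 : ∀ z ∈ Λ₁, HasResidue (fun z => P z - Q z) z 2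
  res2 : ∀ z ∈ Λ, z ∉ Λ₁ → HasResidue (fun z => P z - Q z) z (-1)
  ab : α - β + 1 = 0

lemma log_order {f : ℂ → ℂ} {u : ℂ} (hf : MeromorphicAt f u) {k : ℤ}
    (hk : meromorphicOrderAt f u = k) :
    Tendsto (fun z => (z - u) * (deriv f z / f z)) (𝓝[≠] u) (𝓝 k) := by
  obtain ⟨g, hg, hg0, hpg⟩ := (meromorphicOrderAt_eq_int_iff hf).1 hk
  have h1 : ContinuousAt (fun z => k + (z - u) * (deriv g z / g z)) u := by
    have := hg.deriv.continuousAt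
    have := hg.continuousAt
    fun_prop (disch := assumption)
  have h2 : Tendsto (fun z => k + (z - u) * (deriv g z / g z)) (𝓝[≠] u) (𝓝 k) := by
    have h3 := h1.tendsto.mono_left (nhdsWithin_le_nhds (s := {u}ᶜ))
    simpa using h3
  refine h2.congr' ?_
  filter_upwards [EventuallyEq.nhdsNE_deriv hpg, hpg, self_mem_nhdsWithin,
    (hg.eventually_analyticAt.filter_mono nhdsWithin_le_nhds),
    ((hg.continuousAt.eventually_ne hg0).filter_mono nhdsWithin_le_nhds)] with z hz hz' hzu hga hgne
  have hzu' : z - u ≠ 0 := sub_ne_zero.2 hzu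
  rw [hz, hz']
  have h3 : HasDerivAt (fun z => (z - u) ^ k • g z)
      ((k * (z - u) ^ (k - 1)) * g z + (z-u) ^ k * deriv g z) z := by
    have h4 : HasDerivAt (fun z : ℂ => (z - u) ^ k) (k * (z - u) ^ (k - 1)) z := by
      have := (hasDerivAt_zpow k (z - u) (Or.inl hzu')).comp z ((hasDerivAt_id z).sub_const u)
      simpa using! this
    exact h4.mul hga.differentiableAt.hasDerivAt
  rw [h3.deriv, zpow_sub_one₀ hzu', smul_eq_mul]
  have : (z - u) ^ k ≠ 0 := zpow_ne_zero _ hzu'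
  field_simp

namespace CoreSol
variable {α β : ℂ} {P Q : ℂ → ℂ} {Λ Λ₁ : Set ℂ}

lemma f_mero (h : CoreSol α β P Q Λ Λ₁) : Meromorphic (fun z => P z + Q z - z) := by
  intro z
  exact ((h.meroP z).add (h.meroQ z)).sub (MeromorphicAt.id z)

lemma f_deriv (h : CoreSol α β P Q Λ Λ₁) {z : ℂ} (hz : z ∉ Λ) :
    HasDerivAt (fun z => P z + Q z - z) ((P z - Q z) * (P z + Q z - z)) z := by
  have h1 := (h.anP z hz).differentiableAt.hasDerivAt
  have h2 := (h.anQ z hz).differentiableAt.hasDerivAt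
  rw [h.dP z hz] at h1
  rw [h.dQ z hz] at h2
  convert! (h1.add h2).sub (hasDerivAt_id z) using 1
  linear_combination h.ab

lemma f_an (h : CoreSol α β P Q Λ Λ₁) {z : ℂ} (hz : z ∉ Λ) :
    AnalyticAt ℂ (fun z => P z + Q z - z) z :=
  ((h.anP z hz).add (h.anQ z hz)).sub analyticAt_id

lemma ev (h : CoreSol α β P Q Λ Λ₁) {z : ℂ} (hz : z ∉ Λ) : ∀ᶠ w in 𝓝 z, w ∉ Λ :=
  h.closed.isOpen_compl.mem_nhds hz

lemma evNE (h : CoreSol α β P Q Λ Λ₁) (z : ℂ) : ∀ᶠ w in 𝓝[≠] z, w ∉ Λ := by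
  have hfin := h.fin (‖z‖ + 1)
  have h1 : ∀ᶠ w in 𝓝[≠] z, w ∉ (Λ ∩ Metric.closedBall 0 (‖z‖ + 1)) \ {z} := by
    refine Filter.Eventually.filter_mono nhdsWithin_le_nhds ?_
    exact (hfin.subset Set.sdiff_subset).isClosed.isOpen_compl.mem_nhds (by simp)
  have h2 : ∀ᶠ w in 𝓝[≠] z, w ∈ Metric.closedBall (0:ℂ) (‖z‖ + 1) := by
    refine Filter.Eventually.filter_mono nhdsWithin_le_nhds ?_
    refine Filter.mem_of_superset (Metric.isOpen_ball.mem_nhds (x := z) (s := Metric.ball (0:ℂ) (‖z‖ + 1)) (by simp)) Metric.ball_subset_closedBall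
  filter_upwards [h1, h2, self_mem_nhdsWithin] with w h1 h2 h3 h4
  exact h1 ⟨⟨h4, h2⟩, h3⟩

lemma f_ne_top (h : CoreSol α β P Q Λ Λ₁) {z₀ : ℂ} (hz₀ : z₀ ∉ Λ) (hf : P z₀ + Q z₀ - z₀ ≠ 0)
    (u : ℂ) : meromorphicOrderAt (fun z => P z + Q z - z) u ≠ ⊤ := by
  refine h.f_mero.exists_meromorphicOrderAt_ne_top_iff_forall.1 ⟨z₀, ?_⟩ u
  rw [((h.f_an hz₀).meromorphicNFAt.meromorphicOrderAt_eq_zero_iff).2 hf]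
  simp

lemma f_order (h : CoreSol α β P Q Λ Λ₁) {z₀ : ℂ} (hz₀ : z₀ ∉ Λ) (hf : P z₀ + Q z₀ - z₀ ≠ 0)
    (u : ℂ) {k : ℤ} (hk : HasResidue (fun z => P z - Q z) u k) :
    meromorphicOrderAt (fun z => P z + Q z - z) u = k := by
  have hne := h.f_ne_top hz₀ hf u
  obtain ⟨m, hm⟩ := WithTop.ne_top_iff_exists.1 hne
  have h1 := log_order (h.f_mero u) hm.symm
  have h2 : ∀ᶠ z in 𝓝[≠] u, P z + Q z - z ≠ 0 :=
    (meromorphicOrderAt_ne_top_iff_eventually_ne_zero (h.f_mero u)).1 hne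
  have h3 : Tendsto (fun z => (z - u) * (P z - Q z)) (𝓝[≠] u) (𝓝 m) := by
    refine h1.congr' ?_
    filter_upwards [h2, h.evNE u] with z hz hzL
    rw [(h.f_deriv hzL).deriv]
    field_simp
  have := tendsto_nhds_unique h3 hk
  have : m = k := by exact_mod_cast this
  rw [← hm, this]

lemma f_order_reg (h : CoreSol α β P Q Λ Λ₁) {z₀ : ℂ} (hz₀ : z₀ ∉ Λ) (hf : P z₀ + Q z₀ - z₀ ≠ 0)
    {u : ℂ} (hu : u ∉ Λ) : meromorphicOrderAt (fun z => P z + Q z - z) u = 0 := by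
  refine h.f_order hz₀ hf u (k := 0) ?_
  have : ContinuousAt (fun z => (z - u) * (P z - Q z)) u := by
    have := (h.anP u hu).continuousAt
    have := (h.anQ u hu).continuousAt
    fun_prop
  have h3 := this.tendsto.mono_left (nhdsWithin_le_nhds (s := {u}ᶜ))
  simpa [HasResidue] using h3

lemma f_order_one (h : CoreSol α β P Q Λ Λ₁) {z₀ : ℂ} (hz₀ : z₀ ∉ Λ) (hf : P z₀ + Q z₀ - z₀ ≠ 0)
    {u : ℂ} (hu : u ∈ Λ₁) : meromorphicOrderAt (fun z => P z + Q z - z) u = ((2 : ℤ) : WithTop ℤ) :=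
  h.f_order hz₀ hf u (k := 2) (by exact_mod_cast h.res1 u hu)

lemma f_order_two (h : CoreSol α β P Q Λ Λ₁) {z₀ : ℂ} (hz₀ : z₀ ∉ Λ) (hf : P z₀ + Q z₀ - z₀ ≠ 0)
    {u : ℂ} (hu : u ∈ Λ) (hu1 : u ∉ Λ₁) :
    meromorphicOrderAt (fun z => P z + Q z - z) u = ((-1 : ℤ) : WithTop ℤ) :=
  h.f_order hz₀ hf u (k := -1) (by exact_mod_cast h.res2 u hu hu1)

lemma f_ne_zero (h : CoreSol α β P Q Λ Λ₁) {z₀ : ℂ} (hz₀ : z₀ ∉ Λ) (hf : P z₀ + Q z₀ - z₀ ≠ 0)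
    {u : ℂ} (hu : u ∉ Λ) : P u + Q u - u ≠ 0 :=
  ((h.f_an hu).meromorphicNFAt.meromorphicOrderAt_eq_zero_iff).1 (h.f_order_reg hz₀ hf hu)

end CoreSol


section polar
open MeasureTheory ENNReal

lemma polar_lint (F : ℂ → ℝ≥0∞) (hF : Measurable F) (c : ℂ) :
    ∫⁻ z, F z = ∫⁻ t in Set.Ioi (0:ℝ), ENNReal.ofReal t * ∫⁻ θ in Set.Ioo 0 (2 * Real.pi), F (circleMap c t θ) := by
  rw [← lintegral_sub_left_eq_self F c, ← Complex.lintegral_comp_polarCoord_symm]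
  have htar : polarCoord.target = Set.Ioi (0:ℝ) ×ˢ Set.Ioo (-Real.pi) Real.pi := rfl
  have hm : Measurable (fun p : ℝ × ℝ => ENNReal.ofReal p.1 • F (c - Complex.polarCoord.symm p)) := by
    have : Measurable (fun p : ℝ × ℝ => Complex.polarCoord.symm p) := by
      simp only [Complex.polarCoord_symm_apply]
      fun_prop
    simp only [smul_eq_mul]
    fun_prop
  rw [htar, Measure.volume_eq_prod, setLIntegral_prod _ hm.aemeasurable]
  refine lintegral_congr fun t => ?_
  simp only [smul_eq_mul]
  rw [lintegral_const_mul]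
  · congr 1
    have himg : (fun θ : ℝ => θ + Real.pi) ⁻¹' (Set.Ioo 0 (2 * Real.pi)) = Set.Ioo (-Real.pi) Real.pi := by
      ext θ; simp only [Set.mem_preimage, Set.mem_Ioo]; constructor <;> rintro ⟨h1, h2⟩ <;> constructor <;> linarith
    rw [← (measurePreserving_add_right volume Real.pi).setLIntegral_comp_preimage (s := Set.Ioo 0 (2 * Real.pi)) (f := fun θ => F (circleMap c t θ)) measurableSet_Ioo, himg]
    · refine lintegral_congr fun θ => ?_
      congr 1
      simp only [circleMap, Complex.polarCoord_symm_apply]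
      push_cast
      rw [add_mul, Complex.exp_add, Complex.exp_pi_mul_I, Complex.exp_mul_I]
      ring
    · fun_prop
  · have : Measurable (fun θ : ℝ => Complex.polarCoord.symm (t, θ)) := by
      simp only [Complex.polarCoord_symm_apply]
      fun_prop
    fun_prop

def annul (c : ℂ) (a b : ℝ) : Set ℂ := {z | a ≤ dist z c ∧ dist z c ≤ b}

lemma annul_meas (c : ℂ) (a b : ℝ) : MeasurableSet (annul c a b) := by
  have h1 : IsClosed {z : ℂ | a ≤ dist z c} := isClosed_le (by fun_prop) (by fun_prop)
  have h2 : IsClosed {z : ℂ | dist z c ≤ b} := isClosed_le (by fun_prop) (by fun_prop)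
  exact (h1.inter h2).measurableSet

lemma circ_lint {u : ℂ → ℝ} (h0 : ∀ z, 0 ≤ u z) {c : ℂ} {t : ℝ} (hi : CircleIntegrable u c t) :
    ∫⁻ θ in Set.Ioo 0 (2 * Real.pi), ENNReal.ofReal (u (circleMap c t θ)) =
      ENNReal.ofReal (2 * Real.pi * Real.circleAverage u c t) := by
  have hpi := Real.pi_pos
  have h2 : (0:ℝ) ≤ 2 * Real.pi := by positivity
  have hi' : IntegrableOn (fun θ => u (circleMap c t θ)) (Set.Ioo 0 (2 * Real.pi)) :=
    ((intervalIntegrable_iff_integrableOn_Ioo_of_le h2).1 hi)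
  rw [← ofReal_integral_eq_lintegral_ofReal hi' (ae_of_all _ fun θ => h0 _)]
  congr 1
  rw [Real.circleAverage, intervalIntegral.integral_of_le h2, integral_Ioc_eq_integral_Ioo, smul_eq_mul]
  field_simp

lemma annul_lint {u : ℂ → ℝ} (hu : Measurable u) (h0 : ∀ z, 0 ≤ u z) {c : ℂ} {a b : ℝ} (ha : 0 < a)
    (hi : ∀ t ∈ Set.Icc a b, CircleIntegrable u c t) :
    ∫⁻ z in annul c a b, ENNReal.ofReal (u z) =
      ∫⁻ t in Set.Icc a b, ENNReal.ofReal t * ENNReal.ofReal (2 * Real.pi * Real.circleAverage u c t) := by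
  rw [← lintegral_indicator (annul_meas c a b), polar_lint _ ?_ c]
  · have hsub : Set.Icc a b ⊆ Set.Ioi (0:ℝ) := fun t ht => lt_of_lt_of_le ha ht.1
    rw [← lintegral_indicator measurableSet_Icc, ← lintegral_indicator measurableSet_Ioi]
    refine lintegral_congr fun t => ?_
    by_cases ht0 : t ∈ Set.Ioi (0:ℝ)
    · rw [Set.indicator_of_mem ht0]
      have habs : |t| = t := abs_of_pos ht0
      by_cases ht : t ∈ Set.Icc a b
      · rw [Set.indicator_of_mem ht, ← circ_lint h0 (hi t ht)]
        congr 1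
        refine lintegral_congr fun θ => ?_
        rw [Set.indicator_of_mem]
        simpa [annul, dist_eq_norm, circleMap, habs] using ht
      · rw [Set.indicator_of_notMem ht]
        have : ∀ θ, (annul c a b).indicator (fun z => ENNReal.ofReal (u z)) (circleMap c t θ) = 0 := by
          intro θ
          rw [Set.indicator_of_notMem]
          simpa [annul, dist_eq_norm, circleMap, habs] using ht
        simp [this]
    · rw [Set.indicator_of_notMem ht0, Set.indicator_of_notMem (fun h => ht0 (hsub h))]
  · exact (hu.ennreal_ofReal).indicator (annul_meas c a b)

lemma annul_upper {u : ℂ → ℝ} (hu : Measurable u) (h0 : ∀ z, 0 ≤ u z) {c : ℂ} {a b B : ℝ} (ha : 0 < a) (hab : a ≤ b)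
    (hi : ∀ t ∈ Set.Icc a b, CircleIntegrable u c t)
    (hB : ∀ t ∈ Set.Icc a b, Real.circleAverage u c t ≤ B) :
    ∫⁻ z in annul c a b, ENNReal.ofReal (u z) ≤ ENNReal.ofReal (2 * Real.pi * B * b * (b - a)) := by
  have hpi := Real.pi_pos
  rw [annul_lint hu h0 ha hi]
  have : ∀ t ∈ Set.Icc a b, ENNReal.ofReal t * ENNReal.ofReal (2 * Real.pi * Real.circleAverage u c t) ≤
      ENNReal.ofReal (2 * Real.pi * B * b) := by
    intro t ht
    rw [← ENNReal.ofReal_mul (by linarith [ht.1])]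
    apply ENNReal.ofReal_le_ofReal
    have hca : 0 ≤ Real.circleAverage u c t := by
      rw [Real.circleAverage, smul_eq_mul]
      apply mul_nonneg (by positivity)
      exact intervalIntegral.integral_nonneg (by positivity) (fun _ _ => h0 _)
    have := hB t ht
    rw [mul_comm (2 * Real.pi * B)]
    have h1 := ht.1; have h2 := ht.2
    have hb : 0 ≤ b := by linarith
    gcongr
  calc _ ≤ ∫⁻ t in Set.Icc a b, ENNReal.ofReal (2 * Real.pi * B * b) :=
        setLIntegral_mono' measurableSet_Icc this
    _ = _ := by
      rw [setLIntegral_const, Real.volume_Icc, ← ENNReal.ofReal_mul' (by linarith)]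

lemma annul_lower {u : ℂ → ℝ} (hu : Measurable u) (h0 : ∀ z, 0 ≤ u z) {c : ℂ} {a b m : ℝ} (ha : 0 < a) (hab : a ≤ b)
    (hi : ∀ t ∈ Set.Icc a b, CircleIntegrable u c t) (hm0 : 0 ≤ m)
    (hB : ∀ t ∈ Set.Icc a b, m ≤ Real.circleAverage u c t) :
    ENNReal.ofReal (2 * Real.pi * m * a * (b - a)) ≤ ∫⁻ z in annul c a b, ENNReal.ofReal (u z) := by
  have hpi := Real.pi_pos
  rw [annul_lint hu h0 ha hi]
  have : ∀ t ∈ Set.Icc a b, ENNReal.ofReal (2 * Real.pi * m * a) ≤ ENNReal.ofReal t * ENNReal.ofReal (2 * Real.pi * Real.circleAverage u c t) := by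
    intro t ht
    rw [← ENNReal.ofReal_mul (by linarith [ht.1])]
    apply ENNReal.ofReal_le_ofReal
    have := hB t ht
    rw [mul_comm (2 * Real.pi * m)]
    have h1 := ht.1; have h2 := ht.2
    have : 0 ≤ t := by linarith
    gcongr
  calc _ = ∫⁻ t in Set.Icc a b, ENNReal.ofReal (2 * Real.pi * m * a) := by
        rw [setLIntegral_const, Real.volume_Icc, ← ENNReal.ofReal_mul' (by linarith)]
    _ ≤ _ := setLIntegral_mono' measurableSet_Icc this

lemma inv_lint (a : ℂ) {ρ : ℝ} :
    ∫⁻ z in Metric.closedBall a ρ, ENNReal.ofReal (‖z - a‖⁻¹) ≤ ENNReal.ofReal (2 * Real.pi * ρ) := by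
  have hpi := Real.pi_pos
  rw [← lintegral_indicator Metric.isClosed_closedBall.measurableSet, polar_lint _ ?_ a]
  · calc _ ≤ ∫⁻ t in Set.Ioi (0:ℝ), (Set.Icc 0 ρ).indicator (fun _ => ENNReal.ofReal (2 * Real.pi)) t := by
          refine setLIntegral_mono' measurableSet_Ioi fun t ht => ?_
          have ht' : 0 < t := ht
          have habs : |t| = t := abs_of_pos ht
          by_cases htρ : t ≤ ρ
          · rw [Set.indicator_of_mem (by exact ⟨ht'.le, htρ⟩)]
            have : ∀ θ, (Metric.closedBall a ρ).indicator (fun z => ENNReal.ofReal (‖z - a‖⁻¹)) (circleMap a t θ) = ENNReal.ofReal t⁻¹ := by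
              intro θ
              rw [Set.indicator_of_mem]
              · simp [circleMap, habs]
              · simpa [circleMap, habs] using htρ
            simp only [this, lintegral_const, Measure.restrict_apply MeasurableSet.univ, Set.univ_inter, Real.volume_Ioo, sub_zero]
            rw [← mul_assoc, ← ENNReal.ofReal_mul ht'.le, mul_inv_cancel₀ ht'.ne']
            simp
          · have : ∀ θ, (Metric.closedBall a ρ).indicator (fun z => ENNReal.ofReal (‖z - a‖⁻¹)) (circleMap a t θ) = 0 := by
              intro θ
              rw [Set.indicator_of_notMem]
              simpa [circleMap, habs] using htρ
            simp [this]
      _ ≤ ∫⁻ t, (Set.Icc 0 ρ).indicator (fun _ => ENNReal.ofReal (2 * Real.pi)) t := setLIntegral_le_lintegral _ _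
      _ = _ := by
        rw [lintegral_indicator measurableSet_Icc, setLIntegral_const, Real.volume_Icc, ← ENNReal.ofReal_mul (by positivity)]
        simp
  · refine Measurable.indicator ?_ Metric.isClosed_closedBall.measurableSet
    fun_prop

lemma mean_le {u : ℂ → ℝ} (hu : Measurable u) (h0 : ∀ z, 0 ≤ u z) {A : Finset ℂ} {R L m : ℝ} (hR : 0 < R) (hL : 0 ≤ L)
    (hA : ∀ a ∈ A, ‖a‖ ≤ 8 * R) (hi : ∀ t ∈ Set.Icc (R / 2) R, CircleIntegrable u 0 t) (hm0 : 0 ≤ m)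
    (hB : ∀ t ∈ Set.Icc (R / 2) R, m ≤ Real.circleAverage u 0 t)
    (hle : ∀ z, ‖z‖ ≤ R → z ∉ A → u z ≤ L + ∑ a ∈ A, ‖z - a‖⁻¹) : m * R ≤ 2 * L * R + 36 * A.card := by
  have hpi := Real.pi_pos
  have h1 := annul_lower hu h0 (by positivity) (by linarith) hi hm0 hB
  have h2 : ∫⁻ z in annul 0 (R / 2) R, ENNReal.ofReal (u z) ≤ ENNReal.ofReal (Real.pi * R ^ 2 * L + A.card * (2 * Real.pi * (9 * R))) := by
    calc _ ≤ ∫⁻ z in Metric.closedBall 0 R, ENNReal.ofReal (u z) := by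
          refine lintegral_mono_set ?_
          intro z hz
          exact hz.2
      _ ≤ ∫⁻ z in Metric.closedBall 0 R, (ENNReal.ofReal L + ∑ a ∈ A, ENNReal.ofReal (‖z - a‖⁻¹)) := by
          refine setLIntegral_mono_ae' Metric.isClosed_closedBall.measurableSet ?_
          have : ∀ᵐ z : ℂ, z ∉ (A : Set ℂ) := (A.finite_toSet.measure_zero volume) |> measure_eq_zero_iff_ae_notMem.1
          filter_upwards [this] with z hz hzR
          rw [← ENNReal.ofReal_sum_of_nonneg (fun _ _ => by positivity), ← ENNReal.ofReal_add hL (Finset.sum_nonneg (fun _ _ => by positivity))]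
          exact ENNReal.ofReal_le_ofReal (hle z (by simpa using hzR) (by simpa using hz))
      _ = ENNReal.ofReal L * volume (Metric.closedBall (0:ℂ) R) + ∑ a ∈ A, ∫⁻ z in Metric.closedBall 0 R, ENNReal.ofReal (‖z - a‖⁻¹) := by
          rw [lintegral_add_left measurable_const, setLIntegral_const, lintegral_finsetSum]
          intro a _
          fun_prop
      _ ≤ ENNReal.ofReal (Real.pi * R ^ 2 * L) + ∑ a ∈ A, ENNReal.ofReal (2 * Real.pi * (9 * R)) := by
          gcongr with a ha
          · rw [Complex.volume_closedBall, mul_comm (Real.pi * R^2), ENNReal.ofReal_mul hL, mul_comm Real.pi, ENNReal.ofReal_mul (by positivity), ENNReal.ofReal_pow hR.le]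
            gcongr
            rw [← ENNReal.ofReal_coe_nnreal]; rfl
          · refine le_trans (lintegral_mono_set ?_) (inv_lint a)
            intro z hz
            rw [Metric.mem_closedBall, dist_eq_norm] at *
            have := norm_sub_le z a
            have := hA a ha
            rw [sub_zero] at hz
            linarith
      _ = _ := by
        rw [Finset.sum_const, nsmul_eq_mul, ENNReal.ofReal_add (by positivity) (by positivity), ENNReal.ofReal_mul (p := (A.card:ℝ)) (by positivity)]
        simp
  have h3 := h1.trans h2
  rw [ENNReal.ofReal_le_ofReal_iff (by positivity)] at h3
  have h4 : Real.pi * R * (m * R) ≤ Real.pi * R * (2 * L * R + 36 * A.card) := by nlinarith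
  exact le_of_mul_le_mul_left h4 (by positivity)

end polar


lemma submean {F : ℂ → ℂ} {w : ℂ} {t : ℝ} (ht : 0 < t) (hF : AnalyticOnNhd ℂ F (Metric.closedBall w t)) :
    Real.posLog ‖F w‖ ≤ Real.circleAverage (fun z => Real.posLog ‖F z‖) w t := by
  have habs : |t| = t := abs_of_pos ht
  have hs : MeromorphicOn F (Metric.sphere w |t|) := fun z hz =>
    (hF z (by rw [habs] at hz; exact Metric.sphere_subset_closedBall hz)).meromorphicAt
  have hnn : 0 ≤ Real.circleAverage (fun z => Real.posLog ‖F z‖) w t :=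
    Real.circleAverage_nonneg_of_nonneg (fun _ _ => Real.posLog_nonneg)
  by_cases h0 : F w = 0
  · simpa [h0] using hnn
  · rw [Real.posLog_apply]
    refine max_le hnn ?_
    rw [← habs] at hF
    have h1 := AnalyticOnNhd.circleAverage_log_norm ht.ne' hF h0
    have h2 : 0 ≤ ∑ᶠ u, (MeromorphicOn.divisor F (Metric.closedBall w |t|) u : ℝ) * Real.log (t * ‖w - u‖⁻¹) := by
      refine finsum_nonneg fun u => ?_
      by_cases hu : u ∈ Metric.closedBall w |t|
      · refine mul_nonneg ?_ ?_
        · exact_mod_cast (MeromorphicOn.AnalyticOnNhd.divisor_nonneg hF) u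
        · rcases eq_or_ne u w with rfl | hne
          · simp
          · apply Real.log_nonneg
            rw [← div_eq_mul_inv, one_le_div (norm_pos_iff.2 (sub_ne_zero.2 hne.symm))]
            rw [habs, Metric.mem_closedBall, dist_comm, dist_eq_norm] at hu
            exact hu
      · simp [hu]
    have h3 : Real.circleAverage (fun z => Real.log ‖F z‖) w t ≤ Real.circleAverage (fun z => Real.posLog ‖F z‖) w t :=
      Real.circleAverage_mono hs.circleIntegrable_log_norm hs.circleIntegrable_posLog_norm
        (fun _ _ => le_max_right _ _)
    linarith

lemma sup_bound {F : ℂ → ℂ} (hm : Measurable F) {R B : ℝ} (hR : 0 < R)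
    (hF : AnalyticOnNhd ℂ F (Metric.closedBall 0 (8 * R)))
    (hB : ∀ t ∈ Set.Icc (5 * R) (7 * R), Real.circleAverage (fun z => Real.posLog ‖F z‖) 0 t ≤ B)
    {w : ℂ} (hw : ‖w‖ = 6 * R) : Real.posLog ‖F w‖ ≤ 56 * B := by
  have hpi := Real.pi_pos
  have hB0 : 0 ≤ B := le_trans (Real.circleAverage_nonneg_of_nonneg (fun _ _ => Real.posLog_nonneg))
    (hB (5 * R) ⟨le_rfl, by linarith⟩)
  have hu : Measurable (fun z => Real.posLog ‖F z‖) := Real.continuous_posLog.measurable.comp hm.norm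
  have h0 : ∀ z, 0 ≤ Real.posLog ‖F z‖ := fun _ => Real.posLog_nonneg
  have hI : ∀ (c : ℂ) (t : ℝ), 0 ≤ t → ‖c‖ + t ≤ 8 * R → CircleIntegrable (fun z => Real.posLog ‖F z‖) c t := by
    intro c t ht hc
    refine MeromorphicOn.circleIntegrable_posLog_norm_of_nonneg (fun z hz => (hF z ?_).meromorphicAt) ht
    rw [Metric.mem_sphere, dist_eq_norm] at hz
    rw [Metric.mem_closedBall, dist_zero_right]
    have := norm_le_norm_add_norm_sub c z
    rw [norm_sub_rev] at this
    linarith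
  have h1 := annul_upper (c := 0) hu h0 (by positivity) (by linarith)
    (fun t ht => hI 0 t (by linarith [ht.1]) (by simp; linarith [ht.2])) hB
  have h2 := annul_lower (c := w) (a := R / 2) (b := R) (m := Real.posLog ‖F w‖) hu h0 (by positivity) (by linarith)
    (fun t ht => hI w t (by linarith [ht.1]) (by linarith [ht.2])) Real.posLog_nonneg
    (fun t ht => by
      refine submean (by linarith [ht.1]) (hF.mono ?_)
      refine Metric.closedBall_subset_closedBall' ?_
      rw [dist_zero_right]; linarith [ht.2])
  have h3 : annul w (R / 2) R ⊆ annul 0 (5 * R) (7 * R) := by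
    rintro z ⟨_, hz⟩
    rw [dist_eq_norm] at hz
    have := norm_le_norm_add_norm_sub w z
    have h5 := norm_le_norm_add_norm_sub z w
    rw [norm_sub_rev] at this
    simp only [annul, Set.mem_ofPred_eq, dist_zero_right]
    constructor <;> linarith
  have h4 := (h2.trans (MeasureTheory.lintegral_mono_set h3)).trans h1
  rw [ENNReal.ofReal_le_ofReal_iff (by have : 0 ≤ 7 * R - 5 * R := by linarith
                                       positivity)] at h4
  have : Real.pi * R ^ 2 * Real.posLog ‖F w‖ ≤ Real.pi * R ^ 2 * (56 * B) := by nlinarith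
  exact le_of_mul_le_mul_left this (by positivity)

lemma sup_bound' {F : ℂ → ℂ} (hm : Measurable F) {R B : ℝ} (hR : 0 < R)
    (hF : AnalyticOnNhd ℂ F (Metric.closedBall 0 (8 * R)))
    (hB : ∀ t ∈ Set.Icc (5 * R) (7 * R), Real.circleAverage (fun z => Real.posLog ‖F z‖) 0 t ≤ B)
    {w : ℂ} (hw : ‖w‖ ≤ 6 * R) : ‖F w‖ ≤ Real.exp (56 * B) := by
  have hd : DiffContOnCl ℂ F (Metric.ball 0 (6 * R)) := by
    refine DifferentiableOn.diffContOnCl fun z hz => ?_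
    rw [closure_ball _ (by positivity)] at hz
    exact (hF z (Metric.closedBall_subset_closedBall (by linarith) hz)).differentiableAt.differentiableWithinAt
  refine Complex.norm_le_of_forall_mem_frontier_norm_le Metric.isBounded_ball hd (fun z hz => ?_) (z := w) ?_
  · rw [frontier_ball _ (by positivity)] at hz
    have h1 := sup_bound hm hR hF hB (w := z) (by simpa using hz)
    rcases eq_or_ne (F z) 0 with h0 | h0
    · rw [h0, norm_zero]; positivity
    · have h2 : Real.log ‖F z‖ ≤ 56 * B := le_trans (le_max_right _ _) h1
      exact (Real.log_le_iff_le_exp (norm_pos_iff.2 h0)).1 h2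
  · rw [closure_ball _ (by positivity)]; simpa using hw


lemma log_int {s ε r : ℝ} (hε : 0 < ε) (h1 : ε < s) (h2 : s ≤ r) :
    MeasureTheory.IntegrableOn ((Set.Ici s).indicator (fun t : ℝ => t⁻¹)) (Set.Ioc ε r) ∧
    ∫ t in Set.Ioc ε r, (Set.Ici s).indicator (fun t : ℝ => t⁻¹) t = Real.log (r * s⁻¹) := by
  have hs : 0 < s := by linarith
  constructor
  · apply MeasureTheory.IntegrableOn.indicator _ measurableSet_Ici
    refine MeasureTheory.IntegrableOn.mono_set (ContinuousOn.integrableOn_Icc (a := ε) (b := r) ?_) Set.Ioc_subset_Icc_self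
    exact continuousOn_id.inv₀ (fun t ht => by have := ht.1; simp only [id]; linarith)
  · rw [MeasureTheory.setIntegral_indicator measurableSet_Ici]
    have : Set.Ioc ε r ∩ Set.Ici s = Set.Icc s r := by
      ext t; simp only [Set.mem_inter_iff, Set.mem_Ioc, Set.mem_Ici, Set.mem_Icc]
      constructor
      · rintro ⟨⟨_, a⟩, b⟩; exact ⟨b, a⟩
      · rintro ⟨a, b⟩; exact ⟨⟨by linarith, b⟩, a⟩
    rw [this, MeasureTheory.integral_Icc_eq_integral_Ioc, ← intervalIntegral.integral_of_le h2,
      integral_inv_of_pos hs (by linarith), div_eq_mul_inv]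

open Classical in
lemma count_sum {Λ Λ₁ : Set ℂ} (hsub : Λ₁ ⊆ Λ) (A : Finset ℂ) {t : ℝ} 
    (hA : (A : Set ℂ) = Λ ∩ Metric.closedBall 0 t) :
    ∑ u ∈ A, (if u ∈ Λ₁ then (2:ℝ) else -1) = 3 * setCount Λ₁ t - setCount Λ t := by
  have h1 : setCount Λ t = A.card := by
    rw [setCount, ← hA, Set.ncard_coe_finset]
  have h2 : setCount Λ₁ t = (A.filter (· ∈ Λ₁)).card := by
    rw [setCount, ← Set.ncard_coe_finset]
    congr 2
    ext u
    have : u ∈ (A : Set ℂ) ↔ u ∈ Λ ∩ Metric.closedBall 0 t := by rw [hA]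
    simp only [Finset.coe_filter, Set.mem_inter_iff] at *
    simp only [Finset.mem_coe] at this
    simp only [Set.mem_ofPred_eq, this]
    constructor
    · rintro ⟨a, b⟩; exact ⟨⟨hsub a, b⟩, a⟩
    · rintro ⟨⟨_, b⟩, a⟩; exact ⟨a, b⟩
  have h3 : ∀ u ∈ A, (if u ∈ Λ₁ then (2:ℝ) else -1) = 3 * (if u ∈ Λ₁ then 1 else 0) - 1 := by
    intro u _; split_ifs <;> norm_num
  rw [Finset.sum_congr rfl h3, Finset.sum_sub_distrib, ← Finset.mul_sum, Finset.sum_boole, h1, h2]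
  simp

namespace CoreSol
variable {α β : ℂ} {P Q : ℂ → ℂ} {Λ Λ₁ : Set ℂ}

lemma isolated0 (h : CoreSol α β P Q Λ Λ₁) : ∃ ε : ℝ, 0 < ε ∧ ε ≤ 1 ∧ ∀ u ∈ Λ, u ≠ 0 → ε < ‖u‖ := by
  have := h.evNE 0
  rw [eventually_nhdsWithin_iff, Metric.eventually_nhds_iff] at this
  obtain ⟨e, he, hh⟩ := this
  refine ⟨min (e / 2) 1, by positivity, min_le_right _ _, fun u hu hu0 => ?_⟩
  by_contra hcon
  have : ‖u‖ ≤ e / 2 := le_trans (not_lt.1 hcon) (min_le_left _ _)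
  exact hh (y := u) (by rw [dist_zero_right]; linarith) hu0 hu

open Classical in
lemma jensen (h : CoreSol α β P Q Λ Λ₁) {z₀ : ℂ} (hz₀ : z₀ ∉ Λ) (hf : P z₀ + Q z₀ - z₀ ≠ 0)
    {c r₀ : ℝ} (hc : 0 < c) (hcount : ∀ r ≥ r₀, c * r ^ 2 ≤ 3 * setCount Λ₁ r - setCount Λ r) :
    ∃ r₁ : ℝ, ∀ r ≥ r₁, c / 4 * r ^ 2 ≤ Real.circleAverage (fun z => Real.posLog ‖P z + Q z - z‖) 0 r := by
  obtain ⟨ε, hε, hε1, hiso⟩ := h.isolated0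
  set f : ℂ → ℂ := fun z => P z + Q z - z with hfdef
  set D : ℂ → ℝ := fun u => if u ∈ Λ₁ then (2:ℝ) else -1 with hD
  have hDle : ∀ u, D u ≤ 2 := fun u => by simp only [hD]; split_ifs <;> norm_num
  have hDge : ∀ u, -1 ≤ D u := fun u => by simp only [hD]; split_ifs <;> norm_num
  set K : ℝ := c * r₀ ^ 2 + setCount Λ r₀ + 2 with hK
  have hsc : ∀ S r, 0 ≤ setCount S r := fun S r => by unfold setCount; positivity
  have hK0 : 0 ≤ K := by have := hsc Λ r₀; positivity
  have hcnt : ∀ t : ℝ, 0 < t → c * t ^ 2 - (K - 2) ≤ 3 * setCount Λ₁ t - setCount Λ t := by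
    intro t ht
    rcases le_total r₀ t with h1 | h1
    · have := hcount t h1
      have := hsc Λ r₀
      have : 0 ≤ c * r₀ ^ 2 := by positivity
      linarith
    · have h2 : setCount Λ t ≤ setCount Λ r₀ := by
        unfold setCount
        exact_mod_cast Set.ncard_le_ncard (Set.inter_subset_inter_right _ (Metric.closedBall_subset_closedBall h1)) (h.fin r₀)
      have h3 : c * t ^ 2 ≤ c * r₀ ^ 2 := by gcongr
      have := hsc Λ₁ t
      linarith
  set M : ℝ := |Real.log ‖meromorphicTrailingCoeffAt f 0‖| with hM
  have key : ∀ r : ℝ, 1 < r → c / 2 * (r ^ 2 - ε ^ 2) - K * (Real.log (r * ε⁻¹)) - Real.log r - M ≤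
      Real.circleAverage (fun z => Real.log ‖f z‖) 0 r := by
    intro r hr
    have hr0 : 0 < r := by linarith
    have habs : |r| = r := abs_of_pos hr0
    rw [h.f_mero.meromorphicOn.circleAverage_log_norm hr0.ne']
    have hdiv : ∀ u ∈ Metric.closedBall (0:ℂ) r, (MeromorphicOn.divisor f (Metric.closedBall 0 |r|) u : ℝ) =
        if u ∈ Λ then D u else 0 := by
      intro u hu
      rw [MeromorphicOn.divisor_apply h.f_mero.meromorphicOn (by rwa [habs])]
      by_cases h1 : u ∈ Λ₁
      · rw [h.f_order_one hz₀ hf h1]; simp [hD, h1, h.sub h1]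
      · by_cases h2 : u ∈ Λ
        · rw [h.f_order_two hz₀ hf h2 h1]; simp [hD, h1, h2]
        · rw [h.f_order_reg hz₀ hf h2]; simp [h2]
    have hfin := h.fin r
    set A := hfin.toFinset with hA
    have hAmem : ∀ u, u ∈ A ↔ u ∈ Λ ∧ ‖u‖ ≤ r := fun u => by simp [hA]
    have hsum : ∑ᶠ u, (MeromorphicOn.divisor f (Metric.closedBall 0 |r|) u : ℝ) * Real.log (r * ‖0 - u‖⁻¹) =
        ∑ u ∈ A.erase 0, D u * Real.log (r * ‖u‖⁻¹) := by
      rw [finsum_eq_sum_of_support_subset (s := A.erase 0)]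
      · refine Finset.sum_congr rfl fun u hu => ?_
        have := (hAmem u).1 (Finset.mem_of_mem_erase hu)
        rw [hdiv u (by simpa using this.2)]
        simp [this.1]
      · intro u hu
        rw [Function.mem_support] at hu
        by_cases hur : u ∈ Metric.closedBall (0:ℂ) r
        · rw [hdiv u hur] at hu
          have hu0 : u ≠ 0 := by rintro rfl; simp at hu
          have huL : u ∈ Λ := by by_contra hn; simp [hn] at hu
          simp only [Finset.coe_erase, Set.mem_sdiff, Finset.mem_coe, Set.mem_singleton_iff, hAmem]
          exact ⟨⟨huL, by simpa using hur⟩, hu0⟩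
        · exfalso; apply hu; simp [habs, hur]
    have h0 : -Real.log r ≤ (MeromorphicOn.divisor f (Metric.closedBall 0 |r|) 0 : ℝ) * Real.log r := by
      rw [hdiv 0 (by simp [hr0.le])]
      have : (-1:ℝ) ≤ if (0:ℂ) ∈ Λ then D 0 else 0 := by
        split_ifs
        · exact hDge 0
        · norm_num
      have := mul_le_mul_of_nonneg_right this (Real.log_nonneg hr.le)
      linarith
    have hM' : -M ≤ Real.log ‖meromorphicTrailingCoeffAt f 0‖ := neg_abs_le _
    have hmain : c / 2 * (r ^ 2 - ε ^ 2) - K * (Real.log (r * ε⁻¹)) ≤ ∑ u ∈ A.erase 0, D u * Real.log (r * ‖u‖⁻¹) := by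
      have hli : ∀ u ∈ A.erase 0, _ := fun u hu => log_int (s := ‖u‖) (r := r) hε
        (hiso u ((hAmem u).1 (Finset.mem_of_mem_erase hu)).1 (Finset.ne_of_mem_erase hu))
        ((hAmem u).1 (Finset.mem_of_mem_erase hu)).2
      have hint : ∑ u ∈ A.erase 0, D u * Real.log (r * ‖u‖⁻¹) =
          ∫ t in Set.Ioc ε r, ∑ u ∈ A.erase 0, D u * (Set.Ici ‖u‖).indicator (fun t : ℝ => t⁻¹) t := by
        rw [MeasureTheory.integral_finsetSum]
        · refine Finset.sum_congr rfl fun u hu => ?_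
          rw [MeasureTheory.integral_const_mul, (hli u hu).2]
        · intro u hu
          exact (hli u hu).1.const_mul _
      have hεr : ε ≤ r := by linarith
      have hcont : ContinuousOn (fun t : ℝ => c * t - K * t⁻¹) (Set.Icc ε r) := by
        apply ContinuousOn.sub (by fun_prop)
        apply continuousOn_const.mul
        exact continuousOn_id.inv₀ (fun t ht => by have := ht.1; simp only [id]; linarith)
      have hlhs : c / 2 * (r ^ 2 - ε ^ 2) - K * (Real.log (r * ε⁻¹)) = ∫ t in Set.Ioc ε r, (c * t - K * t⁻¹) := by
        rw [← intervalIntegral.integral_of_le hεr, intervalIntegral.integral_sub, intervalIntegral.integral_const_mul, intervalIntegral.integral_const_mul, integral_id, integral_inv_of_pos hε hr0, div_eq_mul_inv r]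
        · ring
        · apply Continuous.intervalIntegrable; fun_prop
        · apply ContinuousOn.intervalIntegrable
          rw [Set.uIcc_of_le hεr]
          apply continuousOn_const.mul
          exact continuousOn_id.inv₀ (fun t ht => by have := ht.1; simp only [id]; linarith)
      rw [hlhs, hint]
      refine MeasureTheory.setIntegral_mono_on ?_ ?_ measurableSet_Ioc ?_
      · exact (hcont.integrableOn_Icc).mono_set Set.Ioc_subset_Icc_self
      · exact MeasureTheory.integrable_finsetSum _ (fun u hu => (hli u hu).1.const_mul _)
      · intro t ht
        have ht0 : 0 < t := by linarith [ht.1]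
        have hsub : ∑ u ∈ A.erase 0, D u * (Set.Ici ‖u‖).indicator (fun t : ℝ => t⁻¹) t =
            (∑ u ∈ (A.filter (fun u => ‖u‖ ≤ t)).erase 0, D u) * t⁻¹ := by
          rw [Finset.sum_mul, ← Finset.filter_erase, Finset.sum_filter]
          refine Finset.sum_congr rfl fun u _ => ?_
          by_cases hut : ‖u‖ ≤ t
          · rw [Set.indicator_of_mem (by exact hut)]; simp [hut]
          · rw [Set.indicator_of_notMem (by exact hut)]; simp [hut]
        rw [hsub]
        have hcs := count_sum h.sub (A.filter (fun u => ‖u‖ ≤ t)) (t := t) (by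
          ext u
          simp only [Finset.coe_filter, hAmem, Set.mem_ofPred_eq, Set.mem_inter_iff, Metric.mem_closedBall, dist_zero_right]
          constructor
          · rintro ⟨⟨a, b⟩, d⟩; exact ⟨a, d⟩
          · rintro ⟨a, d⟩; exact ⟨⟨a, d.trans ht.2⟩, d⟩)
        have hge : ∑ u ∈ (A.filter (fun u => ‖u‖ ≤ t)), D u - 2 ≤ ∑ u ∈ (A.filter (fun u => ‖u‖ ≤ t)).erase 0, D u := by
          by_cases hm0 : (0:ℂ) ∈ A.filter (fun u => ‖u‖ ≤ t)
          · rw [← Finset.add_sum_erase _ _ hm0]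
            have := hDle 0
            linarith
          · rw [Finset.erase_eq_of_notMem hm0]; linarith
        have h5 := hcnt t ht0
        have h6 : c * t ^ 2 - K ≤ ∑ u ∈ (A.filter (fun u => ‖u‖ ≤ t)).erase 0, D u := by
          have : ∑ u ∈ (A.filter (fun u => ‖u‖ ≤ t)), D u = _ := hcs
          linarith
        have h7 : c * t - K * t⁻¹ = (c * t ^ 2 - K) * t⁻¹ := by field_simp
        rw [h7]
        exact mul_le_mul_of_nonneg_right h6 (by positivity)
    rw [hsum]
    linarith
  set B : ℝ := K + 1 + (M + c / 2 * ε ^ 2 + K * |Real.log ε|) with hB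
  have hB0 : 0 ≤ M + c / 2 * ε ^ 2 + K * |Real.log ε| := by positivity
  refine ⟨max 2 (4 * B / c), fun r hr => ?_⟩
  have hr2 : 2 ≤ r := le_trans (le_max_left _ _) hr
  have hrB : 4 * B / c ≤ r := le_trans (le_max_right _ _) hr
  have hr0 : 0 < r := by linarith
  have h1 := key r (by linarith)
  have h3 : Real.circleAverage (fun z => Real.log ‖f z‖) 0 r ≤ Real.circleAverage (fun z => Real.posLog ‖f z‖) 0 r :=
      Real.circleAverage_mono (h.f_mero.meromorphicOn).circleIntegrable_log_norm (h.f_mero.meromorphicOn).circleIntegrable_posLog_norm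
        (fun _ _ => le_max_right _ _)
  refine le_trans ?_ (h1.trans h3)
  rw [Real.log_mul hr0.ne' (by positivity), Real.log_inv]
  have hl : Real.log r ≤ r := by have := Real.log_le_sub_one_of_pos hr0; linarith
  have h4 : K * Real.log r ≤ K * r := by gcongr
  have h5 : -(K * |Real.log ε|) ≤ K * Real.log ε := by
    have := neg_abs_le (Real.log ε)
    nlinarith
  have h6 : B * r ≤ c / 4 * r ^ 2 := by
    rw [div_le_iff₀ hc] at hrB
    nlinarith
  have h7 : (K + 1) * r + (M + c / 2 * ε ^ 2 + K * |Real.log ε|) ≤ B * r := by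
    rw [hB, add_mul (K + 1)]
    nlinarith
  nlinarith

end CoreSol


lemma nf_ext {F : ℂ → ℂ} (hF : Meromorphic F) : ∃ G : ℂ → ℂ, Meromorphic G ∧ (∀ z, G =ᶠ[𝓝[≠] z] F) ∧
    (∀ z, AnalyticAt ℂ F z → G =ᶠ[𝓝 z] F) ∧ (∀ z, 0 ≤ meromorphicOrderAt F z → AnalyticAt ℂ G z) ∧
    (∀ z, meromorphicOrderAt F z = 0 → G z ≠ 0) ∧
    (∀ S : Set ℂ, F =ᶠ[codiscreteWithin S] G) := by
  have hFo : MeromorphicOn F Set.univ := hF.meromorphicOn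
  refine ⟨toMeromorphicNFOn F Set.univ, ?_, ?_, ?_, ?_, ?_, ?_⟩
  · intro z
    exact (meromorphicNFOn_toMeromorphicNFOn F Set.univ (Set.mem_univ z)).meromorphicAt
  · intro z
    exact hFo.toMeromorphicNFOn_eq_self_on_nhdsNE (Set.mem_univ z)
  · intro z hz
    have := toMeromorphicNFOn_eq_toMeromorphicNFAt_on_nhds hFo (Set.mem_univ z)
    rwa [toMeromorphicNFAt_eq_self.2 hz.meromorphicNFAt] at this
  · intro z hz
    rw [← (meromorphicNFOn_toMeromorphicNFOn F Set.univ (Set.mem_univ z)).meromorphicOrderAt_nonneg_iff_analyticAt,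
      meromorphicOrderAt_congr (hFo.toMeromorphicNFOn_eq_self_on_nhdsNE (Set.mem_univ z))]
    exact hz
  · intro z hz
    rw [ne_eq, ← ne_eq, ← (meromorphicNFOn_toMeromorphicNFOn F Set.univ (Set.mem_univ z)).meromorphicOrderAt_eq_zero_iff,
      meromorphicOrderAt_congr (hFo.toMeromorphicNFOn_eq_self_on_nhdsNE (Set.mem_univ z))]
    exact hz
  · intro S
    exact (toMeromorphicNFOn_eqOn_codiscrete hFo).filter_mono (Filter.codiscreteWithin_mono (Set.subset_univ S))

lemma prod_an (A : Finset ℂ) (z : ℂ) : AnalyticAt ℂ (fun w => ∏ a ∈ A, (w - a)) z := by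
  apply Finset.analyticAt_fun_prod
  intro a _
  fun_prop

lemma prod_ord_reg {A : Finset ℂ} {z : ℂ} (hz : z ∉ A) :
    meromorphicOrderAt (fun w => ∏ a ∈ A, (w - a)) z = 0 := by
  rw [(prod_an A z).meromorphicNFAt.meromorphicOrderAt_eq_zero_iff, Finset.prod_ne_zero_iff]
  intro a ha h0
  rw [sub_eq_zero] at h0
  exact hz (h0 ▸ ha)

lemma prod_ord {A : Finset ℂ} {z : ℂ} (hz : z ∈ A) :
    meromorphicOrderAt (fun w => ∏ a ∈ A, (w - a)) z = ((1:ℤ) : WithTop ℤ) := by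
  rw [meromorphicOrderAt_eq_int_iff (prod_an A z).meromorphicAt]
  refine ⟨fun w => ∏ a ∈ A.erase z, (w - a), prod_an _ z, ?_, ?_⟩
  · rw [Finset.prod_ne_zero_iff]
    intro a ha h0
    rw [sub_eq_zero] at h0
    exact Finset.ne_of_mem_erase ha h0.symm
  · refine Eventually.of_forall fun w => ?_
    simp only [zpow_one, smul_eq_mul]
    rw [Finset.mul_prod_erase A (fun a => w - a) hz]

lemma prod_norm_le {A : Finset ℂ} {R : ℝ} (hA : ∀ a ∈ A, ‖a‖ ≤ 8 * R) {z : ℂ} (hz : ‖z‖ ≤ 8 * R) :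
    ‖∏ a ∈ A, (z - a)‖ ≤ (16 * R) ^ A.card := by
  rw [norm_prod]
  rw [← Finset.prod_const]
  refine Finset.prod_le_prod (fun _ _ => norm_nonneg _) fun a ha => ?_
  have := norm_sub_le z a
  linarith [hA a ha]

namespace CoreSol
variable {α β : ℂ} {P Q : ℂ → ℂ} {Λ Λ₁ : Set ℂ}

lemma fPi_bound (h : CoreSol α β P Q Λ Λ₁) {R B : ℝ} (hR : 1 ≤ R) (A : Finset ℂ)
    (hA : ∀ u, u ∈ A ↔ u ∈ Λ ∧ ‖u‖ ≤ 8 * R)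
    (hB : ∀ t ∈ Set.Icc (5 * R) (7 * R), Real.circleAverage (fun z => Real.posLog ‖P z‖) 0 t ≤ B)
    {z : ℂ} (hz : z ∉ Λ) (hzR : ‖z‖ ≤ 5 * R) :
    ‖(P z + Q z - z) * ∏ a ∈ A, (z - a)‖ ≤ (3 + 10 * R + ‖α‖) * Real.exp (56 * (B + A.card * Real.log (16 * R))) := by
  have hR0 : 0 < R := by linarith
  have hB0 : 0 ≤ B := le_trans (Real.circleAverage_nonneg_of_nonneg (fun _ _ => Real.posLog_nonneg))
    (hB (5 * R) ⟨le_rfl, by linarith⟩)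
  have hl0 : 0 ≤ Real.log (16 * R) := Real.log_nonneg (by linarith)
  have hA8 : ∀ a ∈ A, ‖a‖ ≤ 8 * R := fun a ha => ((hA a).1 ha).2
  set Pi : ℂ → ℂ := fun w => ∏ a ∈ A, (w - a) with hPi
  set X : ℝ := Real.exp (56 * (B + A.card * Real.log (16 * R))) with hX
  have hXpow : (16 * R) ^ A.card ≤ X := by
    rw [← Real.exp_log (show 0 < 16 * R by positivity), ← Real.exp_nat_mul, hX]
    apply Real.exp_le_exp.2
    have : 0 ≤ A.card * Real.log (16 * R) := by positivity
    linarith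
  have hX0 : 0 < X := Real.exp_pos _
  have hFm : Meromorphic (fun w => P w * Pi w) := fun w => (h.meroP w).mul (prod_an A w).meromorphicAt
  obtain ⟨G, hGm, hG1, hG2, hG3, -, hG5⟩ := nf_ext hFm
  have hGan : AnalyticOnNhd ℂ G (Metric.closedBall 0 (8 * R)) := by
    intro w hw
    apply hG3
    change 0 ≤ meromorphicOrderAt (P * Pi) w
    rw [meromorphicOrderAt_mul (h.meroP w) (prod_an A w).meromorphicAt]
    by_cases hwL : w ∈ Λ
    · rw [h.poleP w hwL, prod_ord ((hA w).2 ⟨hwL, by simpa using hw⟩), ← WithTop.coe_add]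
      norm_num
    · exact add_nonneg (h.anP w hwL).meromorphicOrderAt_nonneg (prod_an A w).meromorphicOrderAt_nonneg
  have hGavg : ∀ t ∈ Set.Icc (5 * R) (7 * R), Real.circleAverage (fun z => Real.posLog ‖G z‖) 0 t ≤ B + A.card * Real.log (16 * R) := by
    intro t ht
    have ht0 : 0 < t := by linarith [ht.1]
    have e1 : Real.circleAverage (fun z => Real.posLog ‖G z‖) 0 t = Real.circleAverage (fun z => Real.posLog ‖P z * Pi z‖) 0 t := by
      apply Real.circleAverage_congr_codiscreteWithin _ ht0.ne'
      filter_upwards [hG5 (Metric.sphere 0 |t|)] with w hw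
      rw [← hw]
    have i1 : CircleIntegrable (fun z => Real.posLog ‖P z‖) 0 t := h.meroP.meromorphicOn.circleIntegrable_posLog_norm
    have i2 : CircleIntegrable (fun z => (A.card * Real.log (16 * R) : ℝ)) 0 t := circleIntegrable_const _ _ _
    rw [e1]
    calc _ ≤ Real.circleAverage (fun z => Real.posLog ‖P z‖ + A.card * Real.log (16 * R)) 0 t := by
          refine Real.circleAverage_mono hFm.meromorphicOn.circleIntegrable_posLog_norm (i1.add i2) ?_
          intro w hw
          rw [norm_mul]
          refine Real.posLog_mul.trans ?_
          gcongr
          refine (Real.posLog_le_posLog (norm_nonneg _) (prod_norm_le hA8 (z := w) ?_)).trans ?_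
          · rw [abs_of_pos ht0] at hw
            have : ‖w‖ = t := by simpa using hw
            linarith [ht.2]
          · rw [Real.posLog_pow, Real.posLog_eq_log]
            rw [abs_of_pos (by positivity)]; linarith
      _ ≤ _ := by
        rw [Real.circleAverage_fun_add i1 i2, Real.circleAverage_const]
        linarith [hB t ht]
  have hGX : ∀ w : ℂ, ‖w‖ ≤ 6 * R → ‖G w‖ ≤ X := fun w hw => sup_bound' hGm.measurable hR0 hGan hGavg hw
  have hPX : ∀ w : ℂ, ‖w‖ ≤ 6 * R → ‖Pi w‖ ≤ X := fun w hw =>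
    (prod_norm_le hA8 (by linarith)).trans hXpow
  have hsph : ∀ w ∈ Metric.sphere z R, ‖w‖ ≤ 6 * R := by
    intro w hw
    rw [Metric.mem_sphere, dist_eq_norm] at hw
    have := norm_le_norm_add_norm_sub z w
    rw [norm_sub_rev] at this
    linarith
  have hder : ∀ H : ℂ → ℂ, AnalyticOnNhd ℂ H (Metric.closedBall 0 (8 * R)) → (∀ w : ℂ, ‖w‖ ≤ 6 * R → ‖H w‖ ≤ X) →
      ‖deriv H z‖ ≤ X := by
    intro H hH hHX
    have hd : DiffContOnCl ℂ H (Metric.ball z R) := by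
      refine DifferentiableOn.diffContOnCl fun w hw => ?_
      rw [closure_ball _ hR0.ne'] at hw
      refine (hH w ?_).differentiableAt.differentiableWithinAt
      refine Metric.closedBall_subset_closedBall' ?_ hw
      rw [dist_zero_right]; linarith
    refine (Complex.norm_deriv_le_of_forall_mem_sphere_norm_le hR0 hd (fun w hw => hHX w (hsph w hw))).trans ?_
    exact div_le_self hX0.le hR
  have hdG := hder G hGan hGX
  have hdP := hder Pi (fun w _ => prod_an A w) hPX
  have hGz := hGX z (by linarith)
  have hPz := hPX z (by linarith)
  have hev := hG2 z ((h.anP z hz).mul (prod_an A z))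
  have hGe : G z = P z * Pi z := hev.eq_of_nhds
  have hGd : deriv G z = deriv P z * Pi z + P z * deriv Pi z := by
    rw [hev.deriv_eq]
    exact deriv_fun_mul (h.anP z hz).differentiableAt (prod_an A z).differentiableAt
  rw [h.dP z hz] at hGd
  have hQ : (Q z * Pi z) ^ 2 = G z * deriv Pi z - deriv G z * Pi z - z * G z * Pi z - α * Pi z ^ 2 := by
    rw [hGd, hGe]; ring
  have hQn : ‖Q z * Pi z‖ ^ 2 ≤ (2 + 5 * R + ‖α‖) * X ^ 2 := by
    rw [← norm_pow, hQ]
    calc _ ≤ ‖G z * deriv Pi z‖ + ‖deriv G z * Pi z‖ + ‖z * G z * Pi z‖ + ‖α * Pi z ^ 2‖ := by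
          refine (norm_sub_le _ _).trans ?_
          gcongr
          refine (norm_sub_le _ _).trans ?_
          gcongr
          exact norm_sub_le _ _
      _ ≤ X * X + X * X + 5 * R * X * X + ‖α‖ * X ^ 2 := by
          simp only [norm_mul, norm_pow]
          gcongr
      _ = _ := by ring
  have hα := norm_nonneg α
  have hQn' : ‖Q z * Pi z‖ ≤ (2 + 5 * R + ‖α‖) * X := by
    refine le_of_sq_le_sq ?_ (by positivity)
    rw [mul_pow]
    refine hQn.trans ?_
    gcongr
    nlinarith
  calc ‖(P z + Q z - z) * ∏ a ∈ A, (z - a)‖ = ‖G z + Q z * Pi z - z * Pi z‖ := by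
        rw [hGe]; congr 1; simp only [hPi]; ring
    _ ≤ ‖G z‖ + ‖Q z * Pi z‖ + ‖z * Pi z‖ := (norm_sub_le _ _).trans (by gcongr; exact norm_add_le _ _)
    _ ≤ X + (2 + 5 * R + ‖α‖) * X + 5 * R * X := by
      rw [norm_mul z]
      gcongr
    _ = _ := by ring

end CoreSol


lemma zf_bound {g : ℂ → ℂ} {s : ℂ} {R M : ℝ} (hR : 1 ≤ R) (hM : 0 < M)
    (hg : AnalyticOnNhd ℂ g (Metric.ball 0 (4 * R))) (hg0 : ∀ z ∈ Metric.ball (0:ℂ) (4 * R), g z ≠ 0)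
    (hs : ‖s‖ ≤ R / 2)
    (hb : ∀ z ∈ Metric.ball (0:ℂ) (4 * R), ‖g z‖ ≤ Real.exp M * ‖g s‖) :
    ∀ z : ℂ, ‖z‖ ≤ R → ‖deriv g z / g z‖ ≤ 40 * M ∧ ‖deriv (fun z => deriv g z / g z) z‖ ≤ 40 * M := by
  have hR0 : 0 < R := by linarith
  have hsub : Metric.ball s (3 * R) ⊆ Metric.ball 0 (4 * R) := by
    apply Metric.ball_subset_ball'
    rw [dist_zero_right]; linarith
  set G : ℂ → ℂ := fun z => deriv g z / g z with hG
  have hGan : AnalyticOnNhd ℂ G (Metric.ball 0 (4 * R)) := fun z hz =>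
    (hg z hz).deriv.div (hg z hz) (hg0 z hz)
  have hGd : DifferentiableOn ℂ G (Metric.ball s (3 * R)) := fun z hz =>
    (hGan z (hsub hz)).differentiableAt.differentiableWithinAt
  obtain ⟨H, hH⟩ := hGd.isExactOn_ball
  have hsmem : s ∈ Metric.ball s (3 * R) := Metric.mem_ball_self (by positivity)
  have hgs : g s ≠ 0 := hg0 s (hsub hsmem)
  have hconst : ∀ z ∈ Metric.ball s (3 * R), g z * Complex.exp (-(H z - H s)) = g s := by
    intro z hz
    have hder : ∀ w ∈ Metric.ball s (3 * R), HasDerivAt (fun w => g w * Complex.exp (-(H w - H s))) 0 w := by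
      intro w hw
      have h1 := (hg w (hsub hw)).differentiableAt.hasDerivAt.mul ((((hH w hw).sub_const (H s)).neg).cexp)
      convert! h1 using 1
      have := hg0 w (hsub hw)
      simp only [hG]
      field_simp
      ring
    have := IsOpen.is_const_of_deriv_eq_zero Metric.isOpen_ball (convex_ball s (3 * R)).isPreconnected
      (fun w hw => (hder w hw).differentiableAt.differentiableWithinAt) (fun w hw => (hder w hw).deriv) hz hsmem
    simpa using this
  have hre : ∀ z ∈ Metric.ball s (3 * R), (H z - H s).re ≤ M := by
    intro z hz
    have h1 := congrArg norm (hconst z hz)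
    rw [norm_mul, Complex.norm_exp] at h1
    have h2 := hb z (hsub hz)
    have h3 : 0 < ‖g s‖ := norm_pos_iff.2 hgs
    rw [Complex.neg_re, Real.exp_neg] at h1
    have h4 : ‖g z‖ = ‖g s‖ * Real.exp (H z - H s).re := by
      rw [← h1]; field_simp
    rw [h4, mul_comm] at h2
    exact Real.exp_le_exp.1 (le_of_mul_le_mul_right h2 h3)
  have hbc : ∀ z, ‖z - s‖ ≤ 5 * R / 2 → ‖H z - H s‖ ≤ 10 * M := by
    intro z hz
    have h1 := Complex.borelCaratheodory_zero (f := fun w => H (w + s) - H s) (z := z - s) (R := 3 * R) hM ?_ ?_ (by positivity) ?_ (by simp)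
    · simp only [sub_add_cancel] at h1
      refine h1.trans ?_
      rw [div_le_iff₀ (by linarith)]
      have := mul_le_mul_of_nonneg_left hz hM.le
      nlinarith
    · intro w hw
      have : w + s ∈ Metric.ball s (3 * R) := by simpa using hw
      exact ((hH _ this).comp_add_const w s).differentiableAt.sub_const _ |>.differentiableWithinAt
    · intro w hw
      exact hre _ (by simpa using hw)
    · rw [mem_ball_zero_iff]; linarith
  have hGb : ∀ w : ℂ, ‖w‖ ≤ 3 * R / 2 → ‖G w‖ ≤ 20 * M / R := by
    intro w hw
    have hdist : ∀ v, ‖v - w‖ ≤ R / 2 → ‖v - s‖ ≤ 5 * R / 2 := by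
      intro v hv
      have : v - s = (v - w) + w - s := by ring
      rw [this]
      refine (norm_sub_le _ _).trans ?_
      have := norm_add_le (v - w) w
      linarith
    have hmem : ∀ v, ‖v - w‖ ≤ R / 2 → v ∈ Metric.ball s (3 * R) := by
      intro v hv
      rw [mem_ball_iff_norm]
      linarith [hdist v hv]
    have hd : DiffContOnCl ℂ (fun v => H v - H s) (Metric.ball w (R / 2)) := by
      refine DifferentiableOn.diffContOnCl fun v hv => ?_
      rw [closure_ball _ (by positivity), mem_closedBall_iff_norm] at hv
      exact ((hH v (hmem v hv)).sub_const _).differentiableAt.differentiableWithinAt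
    have h1 := Complex.norm_deriv_le_of_forall_mem_sphere_norm_le (by positivity) hd (C := 10 * M) (fun v hv => by
      rw [mem_sphere_iff_norm] at hv
      exact hbc v (hdist v hv.le))
    rw [((hH w (hmem w (by simp; positivity))).sub_const _).deriv] at h1
    refine h1.trans (le_of_eq ?_)
    field_simp
    norm_num
  intro z hz
  constructor
  · refine (hGb z (by linarith)).trans ?_
    rw [div_le_iff₀ hR0]
    nlinarith
  · have hd : DiffContOnCl ℂ G (Metric.ball z (R / 2)) := by
      refine DifferentiableOn.diffContOnCl fun v hv => ?_
      rw [closure_ball _ (by positivity), mem_closedBall_iff_norm] at hv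
      refine (hGan v ?_).differentiableAt.differentiableWithinAt
      rw [mem_ball_zero_iff]
      have := norm_le_norm_add_norm_sub z v
      rw [norm_sub_rev] at this
      linarith
    have h1 := Complex.norm_deriv_le_of_forall_mem_sphere_norm_le (by positivity) hd (C := 20 * M / R) (fun v hv => by
      rw [mem_sphere_iff_norm] at hv
      apply hGb
      have := norm_le_norm_add_norm_sub z v
      rw [norm_sub_rev] at this
      linarith)
    refine h1.trans ?_
    rw [div_le_iff₀ (by positivity), div_le_iff₀ hR0]
    nlinarith [mul_pos hM hR0, mul_le_mul_of_nonneg_left hR (mul_pos hM hR0).le]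


namespace CoreSol
variable {α β : ℂ} {P Q : ℂ → ℂ} {Λ Λ₁ : Set ℂ}

open Classical in
lemma g_exists (h : CoreSol α β P Q Λ Λ₁) {z₀ : ℂ} (hz₀ : z₀ ∉ Λ) (hf : P z₀ + Q z₀ - z₀ ≠ 0)
    {R E : ℝ} (hR : 2 ≤ R) (A : Finset ℂ)
    (hA : ∀ u, u ∈ A ↔ u ∈ Λ ∧ ‖u‖ ≤ 8 * R)
    (hE : ∀ z, z ∉ Λ → ‖z‖ ≤ 5 * R → ‖(P z + Q z - z) * ∏ a ∈ A, (z - a)‖ ≤ E) :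
    ∃ A₁ ⊆ A, ∃ g : ℂ → ℂ, AnalyticOnNhd ℂ g (Metric.ball 0 (4 * R)) ∧
      (∀ z ∈ Metric.ball (0:ℂ) (4 * R), g z ≠ 0) ∧ (∀ z ∈ Metric.ball (0:ℂ) (4 * R), ‖g z‖ ≤ E) ∧
      (∀ z, z ∉ Λ → g =ᶠ[𝓝 z] fun w => ((P w + Q w - w) * ∏ a ∈ A, (w - a)) / (∏ a ∈ A₁, (w - a)) ^ 3) := by
  have hR0 : 0 < R := by linarith
  set A₁ := A.filter (fun a => a ∈ Λ₁ ∧ ‖a‖ ≤ 4 * R) with hA₁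
  have hmem : ∀ a, a ∈ A₁ ↔ a ∈ Λ₁ ∧ ‖a‖ ≤ 4 * R := by
    intro a
    rw [hA₁, Finset.mem_filter, hA]
    constructor
    · exact fun x => x.2
    · rintro ⟨x, y⟩; exact ⟨⟨h.sub x, by linarith⟩, x, y⟩
  set f : ℂ → ℂ := fun w => P w + Q w - w with hfd
  set Pi : ℂ → ℂ := fun w => ∏ a ∈ A, (w - a) with hPi
  set P1 : ℂ → ℂ := fun w => ∏ a ∈ A₁, (w - a) with hP1
  have hP1n : ∀ z, z ∉ Λ → P1 z ≠ 0 := by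
    intro z hz
    rw [hP1, Finset.prod_ne_zero_iff]
    intro a ha h0
    rw [sub_eq_zero] at h0
    exact hz (h0 ▸ h.sub ((hmem a).1 ha).1)
  have hmP : ∀ w, MeromorphicAt Pi w := fun w => (prod_an A w).meromorphicAt
  have hmP1 : ∀ w, MeromorphicAt P1 w := fun w => (prod_an A₁ w).meromorphicAt
  have hFm : Meromorphic ((f * Pi) * (P1 ^ 3)⁻¹) := fun w =>
    ((h.f_mero w).mul (hmP w)).mul ((hmP1 w).pow 3).inv
  have hFo : ∀ w, meromorphicOrderAt ((f * Pi) * (P1 ^ 3)⁻¹) w =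
      meromorphicOrderAt f w + meromorphicOrderAt Pi w + -((3:ℕ) * meromorphicOrderAt P1 w) := by
    intro w
    rw [meromorphicOrderAt_mul ((h.f_mero w).mul (hmP w)) ((hmP1 w).pow 3).inv,
      meromorphicOrderAt_mul (h.f_mero w) (hmP w), meromorphicOrderAt_inv, meromorphicOrderAt_pow (hmP1 w)]
  obtain ⟨g, hgm, hg1, hg2, hg3, hg4, -⟩ := nf_ext hFm
  have ord1 : ∀ w, ‖w‖ ≤ 4 * R → meromorphicOrderAt ((f * Pi) * (P1 ^ 3)⁻¹) w = 0 := by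
    intro w hw
    rw [hFo]
    by_cases hwL : w ∈ Λ
    · rw [prod_ord ((hA w).2 ⟨hwL, by linarith⟩)]
      by_cases hw1 : w ∈ Λ₁
      · rw [prod_ord ((hmem w).2 ⟨hw1, hw⟩), h.f_order_one hz₀ hf hw1]
        rfl
      · rw [prod_ord_reg (fun hh => hw1 ((hmem w).1 hh).1), h.f_order_two hz₀ hf hwL hw1]
        rfl
    · rw [prod_ord_reg (fun hh => hwL ((hA w).1 hh).1), prod_ord_reg (fun hh => hwL (h.sub ((hmem w).1 hh).1)),
        h.f_order_reg hz₀ hf hwL]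
      rfl
  have ord2 : ∀ w, ‖w‖ ≤ 8 * R → 0 ≤ meromorphicOrderAt ((f * Pi) * (P1 ^ 3)⁻¹) w := by
    intro w hw8
    by_cases hw : ‖w‖ ≤ 4 * R
    · rw [ord1 w hw]
    rw [hFo, prod_ord_reg (fun hh => hw ((hmem w).1 hh).2)]
    by_cases hwL : w ∈ Λ
    · rw [prod_ord ((hA w).2 ⟨hwL, hw8⟩)]
      by_cases hw1 : w ∈ Λ₁
      · rw [h.f_order_one hz₀ hf hw1]
        exact le_of_lt (by decide)
      · rw [h.f_order_two hz₀ hf hwL hw1]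
        exact le_of_eq rfl
    · rw [prod_ord_reg (fun hh => hwL ((hA w).1 hh).1), h.f_order_reg hz₀ hf hwL]
      exact le_of_eq rfl
  have hball : ∀ w ∈ Metric.ball (0:ℂ) (4 * R), ‖w‖ ≤ 4 * R := fun w hw => by
    rw [mem_ball_zero_iff] at hw; exact hw.le
  have hloc : ∀ z, z ∉ Λ → g =ᶠ[𝓝 z] fun w => (f w * Pi w) / (P1 w) ^ 3 := by
    intro z hz
    have : AnalyticAt ℂ ((f * Pi) * (P1 ^ 3)⁻¹) z :=
      ((h.f_an hz).mul (prod_an A z)).mul (((prod_an A₁ z).pow 3).inv (pow_ne_zero 3 (hP1n z hz)))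
    refine (hg2 z this).trans (Eventually.of_forall fun w => ?_)
    simp [div_eq_mul_inv]
  refine ⟨A₁, Finset.filter_subset _ _, g, fun w hw => hg3 w (ord2 w ?_), fun w hw => hg4 w (ord1 w (hball w hw)), ?_, hloc⟩
  · linarith [hball w hw]
  have hU : Bornology.IsBounded (Metric.ball (0:ℂ) (19/4 * R)) := Metric.isBounded_ball
  have hd : DiffContOnCl ℂ g (Metric.ball (0:ℂ) (19/4 * R)) := by
    refine DifferentiableOn.diffContOnCl fun w hw => ?_
    rw [closure_ball _ (by positivity), mem_closedBall_zero_iff] at hw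
    exact (hg3 w (ord2 w (by linarith))).differentiableAt.differentiableWithinAt
  intro z hz
  refine Complex.norm_le_of_forall_mem_frontier_norm_le hU hd ?_ (subset_closure ?_)
  · intro w hw
    rw [frontier_ball _ (by positivity), mem_sphere_zero_iff_norm] at hw
    have hc : Tendsto (fun w => ‖g w‖) (𝓝[≠] w) (𝓝 ‖g w‖) :=
      (hg3 w (ord2 w (by linarith))).continuousAt.norm.tendsto.mono_left nhdsWithin_le_nhds
    refine le_of_tendsto hc ?_
    have e1 : ∀ᶠ v in 𝓝[≠] w, 4 * R + 1 < ‖v‖ :=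
      (continuousAt_id.norm.eventually (lt_mem_nhds (by simp only [id]; linarith))).filter_mono nhdsWithin_le_nhds
    have e2 : ∀ᶠ v in 𝓝[≠] w, ‖v‖ < 5 * R :=
      (continuousAt_id.norm.eventually (gt_mem_nhds (by simp only [id]; linarith))).filter_mono nhdsWithin_le_nhds
    filter_upwards [e1, e2, h.evNE w] with v h1 h2 h3
    rw [(hloc v h3).eq_of_nhds, norm_div, norm_pow]
    have h4 : 1 ≤ ‖P1 v‖ := by
      rw [hP1, norm_prod]
      rw [← Finset.prod_const_one (s := A₁)]
      refine Finset.prod_le_prod (fun _ _ => zero_le_one) fun a ha => ?_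
      have := norm_sub_norm_le v a
      linarith [((hmem a).1 ha).2]
    refine (div_le_self (norm_nonneg _) (one_le_pow₀ h4)).trans (hE v h3 h2.le)
  · rw [mem_ball_zero_iff] at hz ⊢; linarith

end CoreSol


lemma sum_inv_norm_le (A B : Finset ℂ) (hB : B ⊆ A) (z : ℂ) :
    ‖∑ a ∈ B, (z - a)⁻¹‖ ≤ ∑ a ∈ A, ‖z - a‖⁻¹ := by
  refine (norm_sum_le _ _).trans ?_
  simp only [norm_inv]
  exact Finset.sum_le_sum_of_subset_of_nonneg hB (fun _ _ _ => by positivity)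

lemma sum_inv_sq_norm_le (A B : Finset ℂ) (hB : B ⊆ A) (z : ℂ) :
    ‖∑ a ∈ B, (-((z - a) ^ 2)⁻¹)‖ ≤ (∑ a ∈ A, ‖z - a‖⁻¹) ^ 2 := by
  refine (norm_sum_le _ _).trans ?_
  rw [sq, Finset.sum_mul]
  refine (Finset.sum_le_sum_of_subset_of_nonneg hB (fun _ _ _ => norm_nonneg _)).trans ?_
  refine Finset.sum_le_sum fun a ha => ?_
  rw [norm_neg, norm_inv, norm_pow, sq, mul_inv]
  gcongr
  exact Finset.single_le_sum (f := fun a => ‖z - a‖⁻¹) (fun _ _ => by positivity) ha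

lemma hasDerivAt_sum_inv (B : Finset ℂ) (z : ℂ) (hz : z ∉ B) :
    HasDerivAt (fun w => ∑ a ∈ B, (w - a)⁻¹) (∑ a ∈ B, (-((z - a) ^ 2)⁻¹)) z := by
  refine HasDerivAt.fun_sum fun a ha => ?_
  have hne : z - a ≠ 0 := sub_ne_zero.2 (fun hh => hz (hh ▸ ha))
  have := ((hasDerivAt_id z).sub_const a).inv hne
  convert! this using 1
  simp [div_eq_mul_inv]

lemma logDeriv_prodsub (B : Finset ℂ) (z : ℂ) (hz : z ∉ B) :
    logDeriv (fun w => ∏ a ∈ B, (w - a)) z = ∑ a ∈ B, (z - a)⁻¹ := by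
  have hne : ∀ a ∈ B, z - a ≠ 0 := fun a ha => sub_ne_zero.2 (fun hh => hz (hh ▸ ha))
  rw [logDeriv_prod hne (fun a _ => by fun_prop)]
  refine Finset.sum_congr rfl fun a _ => ?_
  simp [logDeriv_apply]

namespace CoreSol
variable {α β : ℂ} {P Q : ℂ → ℂ} {Λ Λ₁ : Set ℂ}

lemma f_bound (h : CoreSol α β P Q Λ Λ₁) {z₀ : ℂ} (hz₀ : z₀ ∉ Λ) (hf : P z₀ + Q z₀ - z₀ ≠ 0)
    {R E δ M : ℝ} (hR : 2 ≤ R) (hzR : ‖z₀‖ ≤ R / 2) (A : Finset ℂ)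
    (hA : ∀ u, u ∈ A ↔ u ∈ Λ ∧ ‖u‖ ≤ 8 * R)
    (hE : ∀ z, z ∉ Λ → ‖z‖ ≤ 5 * R → ‖(P z + Q z - z) * ∏ a ∈ A, (z - a)‖ ≤ E)
    (hδ : 0 < δ) (hδ' : ∀ a ∈ Λ, δ ≤ ‖z₀ - a‖) (hM : 1 ≤ M)
    (hEM : E ≤ Real.exp M * (‖P z₀ + Q z₀ - z₀‖ * δ ^ A.card / (16 * R) ^ (3 * A.card)))
    {z : ℂ} (hz : z ∉ Λ) (hzn : ‖z‖ ≤ R) :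
    ‖P z + Q z - z‖ ≤ 44 * (M + ∑ a ∈ A, ‖z - a‖⁻¹ + R + ‖α‖ + ‖β‖) := by
  have hR0 : 0 < R := by linarith
  obtain ⟨A₁, hA₁, g, hg, hg0, hgE, hloc⟩ := h.g_exists hz₀ hf hR A hA hE
  have hA8 : ∀ a ∈ A, ‖a‖ ≤ 8 * R := fun a ha => ((hA a).1 ha).2
  have hlow : ‖P z₀ + Q z₀ - z₀‖ * δ ^ A.card / (16 * R) ^ (3 * A.card) ≤ ‖g z₀‖ := by
    rw [(hloc z₀ hz₀).eq_of_nhds, norm_div, norm_mul, norm_pow]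
    have hP1 : 0 < ‖∏ a ∈ A₁, (z₀ - a)‖ := by
      rw [norm_pos_iff, Finset.prod_ne_zero_iff]
      intro a ha h0
      rw [sub_eq_zero] at h0
      exact hz₀ (h0 ▸ ((hA a).1 (hA₁ ha)).1)
    refine div_le_div₀ (by positivity) ?_ (by positivity) ?_
    · gcongr
      rw [norm_prod, ← Finset.prod_const]
      exact Finset.prod_le_prod (fun _ _ => hδ.le) fun a ha => hδ' a ((hA a).1 ha).1
    · rw [mul_comm 3, pow_mul]
      gcongr
      refine (prod_norm_le (fun a ha => hA8 a (hA₁ ha)) (by linarith)).trans ?_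
      exact pow_le_pow_right₀ (by linarith) (Finset.card_le_card hA₁)
  have hzf := zf_bound (g := g) (s := z₀) (R := R) (M := M) (by linarith) (by linarith) hg hg0 hzR
    (fun w hw => (hgE w hw).trans (hEM.trans (by gcongr))) z hzn
  set G : ℂ → ℂ := fun z => deriv g z / g z with hG
  have hnA : ∀ w, w ∉ Λ → w ∉ A := fun w hw hh => hw ((hA w).1 hh).1
  have hGe : ∀ w, w ∉ Λ → G w = (P w - Q w) + ∑ a ∈ A, (w - a)⁻¹ - 3 * ∑ a ∈ A₁, (w - a)⁻¹ := by
    intro w hw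
    have hPn : ∀ B ⊆ A, ∏ a ∈ B, (w - a) ≠ 0 := by
      intro B hB
      rw [Finset.prod_ne_zero_iff]
      intro a ha h0
      rw [sub_eq_zero] at h0
      exact hnA w hw (h0 ▸ hB ha)
    have hfw := h.f_ne_zero hz₀ hf hw
    have h1 : G w = logDeriv g w := rfl
    have h2 : logDeriv g w = logDeriv (fun w => ((P w + Q w - w) * ∏ a ∈ A, (w - a)) / (∏ a ∈ A₁, (w - a)) ^ 3) w := by
      rw [logDeriv_apply, logDeriv_apply, (hloc w hw).deriv_eq, (hloc w hw).eq_of_nhds]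
    have h3 := logDeriv_div (f := fun w => (P w + Q w - w) * ∏ a ∈ A, (w - a)) (g := fun w => (∏ a ∈ A₁, (w - a)) ^ 3)
      w (mul_ne_zero hfw (hPn A subset_rfl)) (pow_ne_zero 3 (hPn A₁ hA₁))
      ((h.f_an hw).differentiableAt.mul (prod_an A w).differentiableAt)
      ((prod_an A₁ w).differentiableAt.pow 3)
    have h4 := logDeriv_mul (f := fun w => P w + Q w - w) (g := fun w => ∏ a ∈ A, (w - a)) w hfw
      (hPn A subset_rfl) (h.f_an hw).differentiableAt (prod_an A w).differentiableAt
    rw [h1, h2, h3, h4, logDeriv_fun_pow (prod_an A₁ w).differentiableAt, logDeriv_prodsub A w (hnA w hw),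
      logDeriv_prodsub A₁ w (fun hh => hnA w hw (hA₁ hh)), logDeriv_apply, (h.f_deriv hw).deriv]
    field_simp
    push_cast
    ring
  have hzb : z ∈ Metric.ball (0:ℂ) (4 * R) := by rw [mem_ball_zero_iff]; linarith
  have hGd : HasDerivAt G (deriv G z) z :=
    ((hg z hzb).deriv.div (hg z hzb) (hg0 z hzb)).differentiableAt.hasDerivAt
  have hd1 := (hGd.sub (hasDerivAt_sum_inv A z (hnA z hz))).add
    ((hasDerivAt_sum_inv A₁ z (fun hh => hnA z hz (hA₁ hh))).const_mul 3)
  have hd2 : HasDerivAt (fun w => P w - Q w) (deriv G z - ∑ a ∈ A, (-((z - a) ^ 2)⁻¹) + 3 * ∑ a ∈ A₁, (-((z - a) ^ 2)⁻¹)) z := by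
    refine hd1.congr_of_eventuallyEq ?_
    filter_upwards [h.ev hz] with w hw
    simp only [Pi.add_apply, Pi.sub_apply]
    rw [hGe w hw]; ring
  have hd3 : HasDerivAt (fun w => P w - Q w) ((-(Q z) ^ 2 - z * P z - α) - ((P z) ^ 2 + z * Q z + β)) z := by
    rw [← h.dP z hz, ← h.dQ z hz]
    exact (h.anP z hz).differentiableAt.hasDerivAt.sub (h.anQ z hz).differentiableAt.hasDerivAt
  have hde := hd2.unique hd3
  have s1 := sum_inv_norm_le A A subset_rfl z
  have s2 := sum_inv_norm_le A A₁ hA₁ z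
  have s3 := sum_inv_sq_norm_le A A subset_rfl z
  have s4 := sum_inv_sq_norm_le A A₁ hA₁ z
  have hGz := hGe z hz
  set S := ∑ a ∈ A, ‖z - a‖⁻¹ with hS
  have hS0 : 0 ≤ S := Finset.sum_nonneg fun _ _ => by positivity
  set X := ∑ a ∈ A, (z - a)⁻¹
  set X1 := ∑ a ∈ A₁, (z - a)⁻¹
  set Y := ∑ a ∈ A, (-((z - a) ^ 2)⁻¹)
  set Y1 := ∑ a ∈ A₁, (-((z - a) ^ 2)⁻¹)
  obtain ⟨b1, b2⟩ := hzf
  change ‖G z‖ ≤ _ at b1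
  have hD : ‖P z - Q z‖ ≤ 40 * M + 4 * S := by
    have e : P z - Q z = G z - X + 3 * X1 := by rw [hGz]; ring
    rw [e]
    calc _ ≤ ‖G z‖ + ‖X‖ + ‖3 * X1‖ := (norm_add_le _ _).trans (by gcongr; exact norm_sub_le _ _)
      _ ≤ 40 * M + S + 3 * S := by
        rw [norm_mul]; norm_num; gcongr
      _ = _ := by ring
  have hD' : ‖deriv G z - Y + 3 * Y1‖ ≤ 40 * M + 4 * S ^ 2 := by
    calc _ ≤ ‖deriv G z‖ + ‖Y‖ + ‖3 * Y1‖ := (norm_add_le _ _).trans (by gcongr; exact norm_sub_le _ _)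
      _ ≤ 40 * M + S ^ 2 + 3 * S ^ 2 := by
        rw [norm_mul]; norm_num; gcongr
      _ = _ := by ring
  set D' := deriv G z - Y + 3 * Y1
  have key : (P z + Q z + z) ^ 2 = z ^ 2 - 2 * D' - (P z - Q z) ^ 2 - 2 * (α + β) := by
    rw [hde]; ring
  have hα := norm_nonneg α
  have hβ := norm_nonneg β
  set W := M + S + R + ‖α‖ + ‖β‖ with hW
  have hn : ‖P z + Q z + z‖ ^ 2 ≤ R ^ 2 + 2 * (40 * M + 4 * S ^ 2) + (40 * M + 4 * S) ^ 2 + 2 * (‖α‖ + ‖β‖) := by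
    rw [← norm_pow, key]
    calc _ ≤ ‖z ^ 2‖ + ‖2 * D'‖ + ‖(P z - Q z) ^ 2‖ + ‖2 * (α + β)‖ := by
          refine (norm_sub_le _ _).trans ?_
          gcongr
          refine (norm_sub_le _ _).trans ?_
          gcongr
          exact norm_sub_le _ _
      _ ≤ _ := by
        simp only [norm_mul, norm_pow, Complex.norm_ofNat]
        gcongr
        exact norm_add_le _ _
  have hW1 : 1 ≤ W := by linarith
  have hn2 : ‖P z + Q z + z‖ ≤ 42 * W := by
    refine le_of_sq_le_sq ?_ (by positivity)
    have a1 : R ^ 2 ≤ W ^ 2 := by gcongr; linarith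
    have a2 : 40 * M ≤ 40 * W ^ 2 := by nlinarith
    have a3 : S ^ 2 ≤ W ^ 2 := by gcongr; linarith
    have a4 : (40 * M + 4 * S) ^ 2 ≤ (40 * W) ^ 2 := by
      gcongr
      linarith
    have a5 : ‖α‖ + ‖β‖ ≤ W ^ 2 := by nlinarith
    nlinarith
  calc ‖P z + Q z - z‖ = ‖(P z + Q z + z) - 2 * z‖ := by congr 1; ring
    _ ≤ ‖P z + Q z + z‖ + 2 * ‖z‖ := by
      refine (norm_sub_le _ _).trans ?_
      simp
    _ ≤ 42 * W + 2 * R := by gcongr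
    _ ≤ _ := by linarith

end CoreSol


namespace CoreSol
variable {α β : ℂ} {P Q : ℂ → ℂ} {Λ Λ₁ : Set ℂ}

set_option maxHeartbeats 1600000 in
lemma core (h : CoreSol α β P Q Λ Λ₁) {z₀ : ℂ} (hz₀ : z₀ ∉ Λ) (hf : P z₀ + Q z₀ - z₀ ≠ 0)
    {c r₀ K C : ℝ} (hc : 0 < c) (hcount : ∀ r ≥ r₀, c * r ^ 2 ≤ 3 * setCount Λ₁ r - setCount Λ r)
    (hK : 0 ≤ K) (hcK : ∀ r ≥ r₀, setCount Λ r ≤ K * r ^ 2) (hC : 0 ≤ C)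
    (hm : ∀ r ≥ 1, Real.circleAverage (fun z => Real.posLog ‖P z‖) 0 r ≤ C * r ^ 2) : False := by
  obtain ⟨r₁, hr₁⟩ := h.jensen hz₀ hf hc hcount
  obtain ⟨δ, hδ, hδ'⟩ : ∃ δ > 0, ∀ a ∈ Λ, δ ≤ ‖z₀ - a‖ := by
    obtain ⟨δ, hδ, hb⟩ := Metric.mem_nhds_iff.1 (h.closed.isOpen_compl.mem_nhds hz₀)
    refine ⟨δ, hδ, fun a ha => ?_⟩
    by_contra hlt
    push Not at hlt
    exact hb (show a ∈ Metric.ball z₀ δ by rw [Metric.mem_ball, dist_eq_norm, norm_sub_rev]; exact hlt) ha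
  set F0 := ‖P z₀ + Q z₀ - z₀‖ with hF0
  have hF0p : 0 < F0 := norm_pos_iff.2 hf
  have hα := norm_nonneg α
  have hβ := norm_nonneg β
  set K' := 12 + ‖α‖ + 56 * 49 * C + 59 * 64 * 16 * K + |Real.log F0| + 64 * K * |Real.log δ| with hK'
  have hK'1 : 1 ≤ K' := by
    have : 0 ≤ 64 * K * |Real.log δ| := by positivity
    have : 0 ≤ |Real.log F0| := by positivity
    nlinarith
  set K2 := K' + 1 + ‖α‖ + ‖β‖ with hK2
  set T := 88 * K2 + 6 + 36 * 64 * K with hT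
  have hT0 : 0 < T := by positivity
  obtain ⟨R, hR2, hR0, hR1, hRz, hRT⟩ : ∃ R : ℝ, 2 ≤ R ∧ r₀ ≤ R ∧ r₁ ≤ R / 2 ∧ ‖z₀‖ ≤ R / 2 ∧ 16 * T / c < R := by
    have e : ∀ᶠ R : ℝ in atTop, 2 ≤ R ∧ r₀ ≤ R ∧ r₁ ≤ R / 2 ∧ ‖z₀‖ ≤ R / 2 ∧ 16 * T / c < R := by
      filter_upwards [eventually_ge_atTop 2, eventually_ge_atTop r₀, eventually_ge_atTop (2 * r₁),
        eventually_ge_atTop (2 * ‖z₀‖), eventually_gt_atTop (16 * T / c)] with R a b c d e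
      exact ⟨a, b, by linarith, by linarith, e⟩
    exact e.exists
  have hRp : 0 < R := by linarith
  set A := (h.fin (8 * R)).toFinset with hAd
  have hA : ∀ u, u ∈ A ↔ u ∈ Λ ∧ ‖u‖ ≤ 8 * R := by
    intro u
    rw [hAd, Set.Finite.mem_toFinset, Set.mem_inter_iff, mem_closedBall_zero_iff]
  have hN : (A.card : ℝ) ≤ 64 * K * R ^ 2 := by
    have := hcK (8 * R) (by linarith)
    rw [setCount, Set.ncard_eq_toFinset_card _ (h.fin (8 * R))] at this
    refine this.trans (le_of_eq (by ring))
  have hN0 : (0:ℝ) ≤ A.card := Nat.cast_nonneg _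
  have hB : ∀ t ∈ Set.Icc (5 * R) (7 * R), Real.circleAverage (fun z => Real.posLog ‖P z‖) 0 t ≤ 49 * C * R ^ 2 := by
    intro t ht
    refine (hm t (by linarith [ht.1])).trans ?_
    have : t ^ 2 ≤ (7 * R) ^ 2 := by
      have := ht.1
      gcongr
      · linarith
      · exact ht.2
    nlinarith
  have hl1 : Real.log (16 * R) ≤ 16 * R := (Real.log_le_sub_one_of_pos (by positivity)).trans (by linarith)
  have hl0 : 0 ≤ Real.log (16 * R) := Real.log_nonneg (by linarith)
  set E := (3 + 10 * R + ‖α‖) * Real.exp (56 * (49 * C * R ^ 2 + A.card * Real.log (16 * R))) with hE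
  set M := K' * R ^ 3 with hM
  have hR3 : 1 ≤ R ^ 3 := one_le_pow₀ (by linarith)
  have hM1 : 1 ≤ M := one_le_mul_of_one_le_of_one_le hK'1 hR3
  have hR23 : R ^ 2 ≤ R ^ 3 := pow_le_pow_right₀ (by linarith) (by norm_num)
  have hR13 : R ≤ R ^ 3 := le_self_pow₀ (by linarith) (by norm_num)
  have hEM : E ≤ Real.exp M * (F0 * δ ^ A.card / (16 * R) ^ (3 * A.card)) := by
    have e1 : F0 * δ ^ A.card / (16 * R) ^ (3 * A.card) =
        Real.exp (Real.log F0 + A.card * Real.log δ - (3 * A.card) * Real.log (16 * R)) := by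
      rw [Real.exp_sub, Real.exp_add, Real.exp_log hF0p, Real.exp_nat_mul, Real.exp_log hδ]
      congr 1
      have : (3 * (A.card:ℝ)) = ((3 * A.card : ℕ) : ℝ) := by push_cast; ring
      rw [this, Real.exp_nat_mul, Real.exp_log (by positivity)]
    have e2 : 3 + 10 * R + ‖α‖ ≤ Real.exp (2 + 10 * R + ‖α‖) := by
      have := Real.add_one_le_exp (2 + 10 * R + ‖α‖)
      linarith
    rw [e1, ← Real.exp_add, hE]
    refine (mul_le_mul_of_nonneg_right e2 (Real.exp_pos _).le).trans ?_
    rw [← Real.exp_add]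
    apply Real.exp_le_exp.2
    have t1 : A.card * Real.log (16 * R) ≤ 64 * K * R ^ 2 * (16 * R) := by
      gcongr
    have t2 : -(64 * K * R ^ 2 * |Real.log δ|) ≤ A.card * Real.log δ := by
      have a1 : -(A.card * |Real.log δ|) ≤ A.card * Real.log δ := by
        rw [← mul_neg]
        exact mul_le_mul_of_nonneg_left (neg_abs_le _) hN0
      have a2 : A.card * |Real.log δ| ≤ 64 * K * R ^ 2 * |Real.log δ| := by gcongr
      linarith
    have t3 := neg_abs_le (Real.log F0)
    have t4 : |Real.log F0| ≤ |Real.log F0| * R ^ 3 := le_mul_of_one_le_right (abs_nonneg _) hR3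
    have t5 : 64 * K * R ^ 2 * |Real.log δ| ≤ 64 * K * R ^ 3 * |Real.log δ| := by gcongr
    have t6 : ‖α‖ ≤ ‖α‖ * R ^ 3 := le_mul_of_one_le_right hα hR3
    have t7 : C * R ^ 2 ≤ C * R ^ 3 := by gcongr
    rw [hM, hK']
    nlinarith
  have hfb : ∀ z, z ∉ Λ → ‖z‖ ≤ R → ‖P z + Q z - z‖ ≤ 44 * (M + ∑ a ∈ A, ‖z - a‖⁻¹ + R + ‖α‖ + ‖β‖) :=
    fun z hz hzR => h.f_bound hz₀ hf hR2 hRz A hA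
      (fun w hw hwR => h.fPi_bound (by linarith) A hA hB hw hwR) hδ hδ' hM1 hEM hz hzR
  have hK21 : 1 ≤ K2 := by linarith
  have hmean := mean_le (u := fun z => Real.posLog ‖P z + Q z - z‖) (A := A) (R := R) (L := 44 * K2 + 3 * R)
    (m := c / 4 * (R / 2) ^ 2)
    (Real.continuous_posLog.measurable.comp h.f_mero.measurable.norm) (fun _ => Real.posLog_nonneg) hRp (by positivity)
    (fun a ha => ((hA a).1 ha).2) (fun t _ => h.f_mero.meromorphicOn.circleIntegrable_posLog_norm)
    (by positivity) ?_ ?_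
  · have : c / 4 * (R / 2) ^ 2 * R ≤ T * R ^ 2 := by
      refine hmean.trans ?_
      have : K2 * R ≤ K2 * R ^ 2 := by
        gcongr
        exact le_self_pow₀ (by linarith) (by norm_num)
      rw [hT]
      nlinarith
    have h2 : c / 16 * R ≤ T := by
      have h3 : (c / 16 * R) * R ^ 2 ≤ T * R ^ 2 := by linarith
      exact le_of_mul_le_mul_right h3 (by positivity)
    rw [div_lt_iff₀ hc] at hRT
    linarith
  · intro t ht
    refine le_trans ?_ (hr₁ t (by linarith [ht.1]))
    have := ht.1
    gcongr
  · intro z hz hzA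
    have hzL : z ∉ Λ := fun hh => hzA ((hA z).2 ⟨hh, by linarith⟩)
    have hS0 : 0 ≤ ∑ a ∈ A, ‖z - a‖⁻¹ := Finset.sum_nonneg fun _ _ => by positivity
    have hb := hfb z hzL hz
    set S := ∑ a ∈ A, ‖z - a‖⁻¹ with hS
    have hb2 : ‖P z + Q z - z‖ ≤ 44 * K2 * R ^ 3 * (1 + S) := by
      refine hb.trans ?_
      have : M + S + R + ‖α‖ + ‖β‖ ≤ K2 * R ^ 3 * (1 + S) := by
        have q1 : 1 ≤ K2 * R ^ 3 := one_le_mul_of_one_le_of_one_le hK21 hR3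
        have q2 : S ≤ K2 * R ^ 3 * S := le_mul_of_one_le_left hS0 q1
        have q3 : M + R + ‖α‖ + ‖β‖ ≤ K2 * R ^ 3 := by
          have := le_mul_of_one_le_right hα hR3
          have := le_mul_of_one_le_right hβ hR3
          rw [hM, hK2]; linarith
        linarith
      linarith
    refine (Real.posLog_le_posLog (norm_nonneg _) hb2).trans ?_
    have q0 : 1 ≤ 44 * K2 * R ^ 3 * (1 + S) := by
      refine one_le_mul_of_one_le_of_one_le (one_le_mul_of_one_le_of_one_le (by linarith) hR3) (by linarith)
    rw [Real.posLog_eq_log (by rwa [abs_of_pos (by linarith)]),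
      Real.log_mul (by positivity) (by positivity), Real.log_mul (by positivity) (by positivity), Real.log_pow]
    have l1 := Real.log_le_sub_one_of_pos (show 0 < 44 * K2 by positivity)
    have l2 := Real.log_le_sub_one_of_pos (show 0 < 1 + S by positivity)
    have l3 := Real.log_le_sub_one_of_pos hRp
    push_cast
    linarith

end CoreSol


lemma isPole_iff {p : ℂ → ℂ} {z : ℂ} (hp : MeromorphicAt p z) : IsPole p z ↔ meromorphicOrderAt p z < 0 := by
  rw [← tendsto_cobounded_iff_meromorphicOrderAt_neg hp, IsPole, tendsto_norm_atTop_iff_cobounded]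

lemma ord_const_mul {p : ℂ → ℂ} {z c : ℂ} (hc : c ≠ 0) (hp : MeromorphicAt p z) :
    meromorphicOrderAt (fun w => c * p w) z = meromorphicOrderAt p z := by
  have h1 : meromorphicOrderAt (fun _ : ℂ => c) z = 0 := by
    rw [(analyticAt_const (x := z) (v := c)).meromorphicNFAt.meromorphicOrderAt_eq_zero_iff]; exact hc
  have := meromorphicOrderAt_mul (f := fun _ : ℂ => c) (g := p) (x := z) (MeromorphicAt.const c z) hp
  rw [h1, zero_add] at this
  exact this

lemma poles_fin {p : ℂ → ℂ} (hp : ∀ z, MeromorphicAt p z) :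
    IsClosed {z | meromorphicOrderAt p z < 0} ∧
    ∀ r : ℝ, ({z | meromorphicOrderAt p z < 0} ∩ Metric.closedBall 0 r).Finite := by
  have hev : ∀ z, ∀ᶠ w in 𝓝[≠] z, w ∉ {z | meromorphicOrderAt p z < 0} := by
    intro z
    filter_upwards [(hp z).eventually_analyticAt] with w hw
    simp only [Set.mem_ofPred_eq, not_lt]
    exact hw.meromorphicOrderAt_nonneg
  constructor
  · rw [← isOpen_compl_iff, isOpen_iff_mem_nhds]
    intro z hz
    have := hev z
    rw [eventually_nhdsWithin_iff] at this
    filter_upwards [this] with w hw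
    by_cases hwz : w = z
    · rw [hwz]; exact hz
    · exact hw hwz
  · intro r
    by_contra hinf
    obtain ⟨z, -, hz⟩ := Set.Infinite.exists_accPt_of_subset_isCompact hinf (isCompact_closedBall (0:ℂ) r) Set.inter_subset_right
    rw [accPt_iff_frequently_nhdsNE] at hz
    exact hz ((hev z).mono fun w hw hw2 => hw hw2.1)

lemma cr_eq {a ρ : ℂ} (ha : a ^ 3 = 1) (hρ : ρ ^ 3 = 1) (hne : a ≠ ρ) : ρ ^ 2 * a + ρ * a ^ 2 = -1 := by
  have h1 : (a - ρ) * (a ^ 2 + a * ρ + ρ ^ 2) = 0 := by linear_combination ha - hρ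
  have h2 := (mul_eq_zero.1 h1).resolve_left (sub_ne_zero.2 hne)
  linear_combination ρ * h2 - hρ

lemma core_of {α β ρ : ℂ} {p q : ℂ → ℂ} (h : IsHamSolution α β p q) (hρ : ρ ^ 3 = 1)
    (hab : ρ ^ 2 * α - ρ * β + 1 = 0) :
    ∃ P Q : ℂ → ℂ, CoreSol (ρ ^ 2 * α) (ρ * β) P Q {z | meromorphicOrderAt p z < 0}
      {z | IsPole p z ∧ HasResidue p z ρ} ∧
      (∀ z, AnalyticAt ℂ p z → P z = ρ ^ 2 * p z) ∧ (∀ z, AnalyticAt ℂ q z → Q z = ρ * q z) ∧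
      (∀ S : Set ℂ, (fun z => ρ ^ 2 * p z) =ᶠ[codiscreteWithin S] P) := by
  have hρ0 : ρ ≠ 0 := by rintro rfl; norm_num at hρ
  have hρ2 : ρ ^ 2 ≠ 0 := pow_ne_zero 2 hρ0
  have hp : ∀ z, MeromorphicAt p z := fun z => h.1 z (Set.mem_univ z)
  have hq : ∀ z, MeromorphicAt q z := fun z => h.2.1 z (Set.mem_univ z)
  have hpm : Meromorphic (fun z => ρ ^ 2 * p z) := fun z => (MeromorphicAt.const _ z).mul (hp z)
  have hqm : Meromorphic (fun z => ρ * q z) := fun z => (MeromorphicAt.const _ z).mul (hq z)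
  obtain ⟨P, hPm, hP1, hP2, hP3, -, hP5⟩ := nf_ext hpm
  obtain ⟨Q, hQm, hQ1, hQ2, hQ3, -, -⟩ := nf_ext hqm
  obtain ⟨hcl, hfin⟩ := poles_fin hp
  have hPan : ∀ z, AnalyticAt ℂ p z → P =ᶠ[𝓝 z] fun z => ρ ^ 2 * p z := fun z hz => hP2 z (analyticAt_const.mul hz)
  have hQan : ∀ z, AnalyticAt ℂ q z → Q =ᶠ[𝓝 z] fun z => ρ * q z := fun z hz => hQ2 z (analyticAt_const.mul hz)
  have hreg : ∀ z, z ∉ {z | meromorphicOrderAt p z < 0} → AnalyticAt ℂ P z ∧ AnalyticAt ℂ Q z := by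
    intro z hz
    simp only [Set.mem_ofPred_eq, not_lt] at hz
    rcases pole_structure h z with ⟨h1, h2⟩ | ⟨h1, -⟩
    · exact ⟨hP3 z (by rwa [ord_const_mul hρ2 (hp z)]), hQ3 z (by rwa [ord_const_mul hρ0 (hq z)])⟩
    · rw [h1] at hz
      exact absurd hz (by decide)
  have hpol : ∀ z ∈ {z | meromorphicOrderAt p z < 0}, meromorphicOrderAt p z = ((-1:ℤ):WithTop ℤ) ∧
      ∃ a, a ^ 3 = 1 ∧ HasResidue p z a ∧ HasResidue (fun z => P z - Q z) z (ρ ^ 2 * a + ρ * a ^ 2) := by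
    intro z hz
    simp only [Set.mem_ofPred_eq] at hz
    rcases pole_structure h z with ⟨h1, h2⟩ | ⟨h1, -, a, ha, hr1, hr2⟩
    · exact absurd hz (not_lt.2 h1)
    · refine ⟨h1, a, ha, hr1, ?_⟩
      have e := (hr1.const_mul (ρ ^ 2)).sub (hr2.const_mul ρ)
      have e2 : ρ ^ 2 * a - ρ * -a ^ 2 = ρ ^ 2 * a + ρ * a ^ 2 := by ring
      rw [e2] at e
      refine e.congr' ?_
      filter_upwards [hP1 z, hQ1 z] with w h1 h2
      rw [h1, h2]; ring
  have hode : ∀ z, ∀ᶠ w in 𝓝[≠] z, deriv P w = -(Q w) ^ 2 - w * P w - ρ ^ 2 * α ∧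
      deriv Q w = (P w) ^ 2 + w * Q w + ρ * β := by
    intro z
    filter_upwards [(hp z).eventually_analyticAt, (hq z).eventually_analyticAt] with w h1 h2
    obtain ⟨o1, o2⟩ := h.2.2 w h1 h2
    rw [(hPan w h1).deriv_eq, (hQan w h2).deriv_eq, (hPan w h1).eq_of_nhds, (hQan w h2).eq_of_nhds,
      deriv_const_mul_field, deriv_const_mul_field, o1, o2]
    constructor
    · ring
    · linear_combination -ρ * p w ^ 2 * hρ
  refine ⟨P, Q, ?_, fun z hz => (hPan z hz).eq_of_nhds, fun z hz => (hQan z hz).eq_of_nhds, hP5⟩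
  refine { meroP := hPm, meroQ := hQm, closed := hcl, fin := hfin, sub := ?_, anP := fun z hz => (hreg z hz).1,
           anQ := fun z hz => (hreg z hz).2, dP := ?_, dQ := ?_, poleP := ?_, res1 := ?_, res2 := ?_, ab := hab }
  · intro z hz
    exact (isPole_iff (hp z)).1 hz.1
  · intro z hz
    obtain ⟨h1, h2⟩ := hreg z hz
    have c1 := h1.deriv.continuousAt
    have c2 : ContinuousAt (fun w => -(Q w) ^ 2 - w * P w - ρ ^ 2 * α) z := by
      have := h1.continuousAt
      have := h2.continuousAt
      fun_prop
    refine tendsto_nhds_unique_of_eventuallyEq (c1.tendsto.mono_left nhdsWithin_le_nhds)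
      (c2.tendsto.mono_left nhdsWithin_le_nhds) ((hode z).mono fun w hw => hw.1)
  · intro z hz
    obtain ⟨h1, h2⟩ := hreg z hz
    have c1 := h2.deriv.continuousAt
    have c2 : ContinuousAt (fun w => (P w) ^ 2 + w * Q w + ρ * β) z := by
      have := h1.continuousAt
      have := h2.continuousAt
      fun_prop
    refine tendsto_nhds_unique_of_eventuallyEq (c1.tendsto.mono_left nhdsWithin_le_nhds)
      (c2.tendsto.mono_left nhdsWithin_le_nhds) ((hode z).mono fun w hw => hw.2)
  · intro z hz
    rw [meromorphicOrderAt_congr (hP1 z), ord_const_mul hρ2 (hp z)]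
    exact (hpol z hz).1
  · intro z hz
    obtain ⟨-, a, ha, hr, hr2⟩ := hpol z ((isPole_iff (hp z)).1 hz.1)
    have : a = ρ := tendsto_nhds_unique hr hz.2
    rw [this] at hr2
    have e : ρ ^ 2 * ρ + ρ * ρ ^ 2 = 2 := by linear_combination 2 * hρ
    rwa [e] at hr2
  · intro z hz hz1
    obtain ⟨-, a, ha, hr, hr2⟩ := hpol z hz
    have hne : a ≠ ρ := by
      rintro rfl
      exact hz1 ⟨(isPole_iff (hp z)).2 hz, hr⟩
    rwa [cr_eq ha hρ hne] at hr2


lemma nPoles_mono {p : ℂ → ℂ} (hp : ∀ z, MeromorphicAt p z) {s t : ℝ} (hst : s ≤ t) :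
    nPoles p s ≤ nPoles p t := by
  have hsupp : ∀ z, ¬ meromorphicOrderAt p z < 0 → poleMult p z = 0 := by
    intro z hz
    rw [not_lt, ← tendsto_nhds_iff_meromorphicOrderAt_nonneg (hp z)] at hz
    obtain ⟨c, hc⟩ := hz
    rw [poleMult, Nat.sInf_eq_zero]
    left
    exact ⟨c, by simpa using hc⟩
  have hfin := (poles_fin hp).2 t
  have e : ∀ r ≤ t, nPoles p r = ∑ z ∈ hfin.toFinset, (Metric.closedBall (0:ℂ) r).indicator (fun z => (poleMult p z : ℝ)) z := by
    intro r hr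
    rw [nPoles, finsum_mem_def, finsum_eq_sum_of_support_subset]
    intro z hz
    rw [Function.mem_support, Set.indicator_apply_ne_zero] at hz
    simp only [Set.Finite.coe_toFinset]
    refine ⟨?_, Metric.closedBall_subset_closedBall hr hz.1⟩
    by_contra hh
    have h2 := hz.2
    rw [Function.mem_support] at h2
    exact h2 (by rw [hsupp z hh]; simp)
  rw [e s hst, e t le_rfl]
  refine Finset.sum_le_sum fun z _ => ?_
  exact Set.indicator_le_indicator_of_subset (Metric.closedBall_subset_closedBall hst) (fun _ => Nat.cast_nonneg _) z

lemma countingN_nonneg {p : ℂ → ℂ} (hp : ∀ z, MeromorphicAt p z) {r : ℝ} (hr : 1 ≤ r) : 0 ≤ countingN p r := by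
  have h0 : 0 ≤ nPoles p 0 := by
    rw [nPoles]
    exact finsum_nonneg fun z => finsum_nonneg fun _ => Nat.cast_nonneg _
  rw [countingN]
  refine add_nonneg (intervalIntegral.integral_nonneg (by linarith) fun t ht => ?_) (mul_nonneg h0 (Real.log_nonneg hr))
  exact div_nonneg (sub_nonneg.2 (nPoles_mono hp ht.1)) ht.1

lemma proximity_eq (p : ℂ → ℂ) (r : ℝ) : proximity p r = Real.circleAverage (fun z => Real.posLog ‖p z‖) 0 r := by
  simp [proximity, Real.circleAverage_def, circleMap, logPlus, Real.posLog_def]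

lemma cr_three {a ρ₁ ρ₂ ρ₃ : ℂ} (ha : a ^ 3 = 1) (h1 : ρ₁ ^ 3 = 1) (h2 : ρ₂ ^ 3 = 1) (h3 : ρ₃ ^ 3 = 1)
    (h12 : ρ₁ ≠ ρ₂) (h13 : ρ₁ ≠ ρ₃) (h23 : ρ₂ ≠ ρ₃) : a = ρ₁ ∨ a = ρ₂ ∨ a = ρ₃ := by
  have key : ∀ x y : ℂ, x ^ 3 = 1 → x ≠ ρ₁ → y ^ 3 = 1 → y ≠ ρ₁ → x ≠ y → x + y + ρ₁ = 0 := by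
    intro x y hx hx1 hy hy1 hxy
    have e1 := cr_eq hx h1 hx1
    have e2 := cr_eq hy h1 hy1
    have hρ0 : ρ₁ ≠ 0 := by rintro rfl; norm_num at h1
    have e3 : (ρ₁ * (x - y)) * (x + y + ρ₁) = 0 := by linear_combination e1 - e2
    exact (mul_eq_zero.1 e3).resolve_left (mul_ne_zero hρ0 (sub_ne_zero.2 hxy))
  by_contra hh
  push Not at hh
  obtain ⟨n1, n2, n3⟩ := hh
  have e1 := key a ρ₂ ha n1 h2 h12.symm n2
  have e2 := key ρ₃ ρ₂ h3 h13.symm h2 h12.symm h23.symm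
  exact n3 (by linear_combination e1 - e2)

lemma count_three {α β : ℂ} {p q : ℂ → ℂ} (h : IsHamSolution α β p q) {ρ₁ ρ₂ ρ₃ : ℂ} (h1 : ρ₁ ^ 3 = 1)
    (h2 : ρ₂ ^ 3 = 1) (h3 : ρ₃ ^ 3 = 1) (h12 : ρ₁ ≠ ρ₂) (h13 : ρ₁ ≠ ρ₃) (h23 : ρ₂ ≠ ρ₃) (r : ℝ) :
    setCount {z | meromorphicOrderAt p z < 0} r = setCount {z | IsPole p z ∧ HasResidue p z ρ₁} r
      + setCount {z | IsPole p z ∧ HasResidue p z ρ₂} r + setCount {z | IsPole p z ∧ HasResidue p z ρ₃} r := by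
  have hp : ∀ z, MeromorphicAt p z := fun z => h.1 z (Set.mem_univ z)
  have hfin := (poles_fin hp).2 r
  have hsub : ∀ ρ, {z | IsPole p z ∧ HasResidue p z ρ} ∩ Metric.closedBall 0 r ⊆ {z | meromorphicOrderAt p z < 0} ∩ Metric.closedBall 0 r :=
    fun ρ z hz => ⟨(isPole_iff (hp z)).1 hz.1.1, hz.2⟩
  have hdis : ∀ ρ ρ', ρ ≠ ρ' → Disjoint ({z | IsPole p z ∧ HasResidue p z ρ} ∩ Metric.closedBall 0 r)
      ({z | IsPole p z ∧ HasResidue p z ρ'} ∩ Metric.closedBall 0 r) := by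
    intro ρ ρ' hne
    rw [Set.disjoint_left]
    intro z hz hz'
    exact hne (tendsto_nhds_unique hz.1.2 hz'.1.2)
  have hun : {z | meromorphicOrderAt p z < 0} ∩ Metric.closedBall 0 r =
      ({z | IsPole p z ∧ HasResidue p z ρ₁} ∩ Metric.closedBall 0 r ∪ {z | IsPole p z ∧ HasResidue p z ρ₂} ∩ Metric.closedBall 0 r)
      ∪ {z | IsPole p z ∧ HasResidue p z ρ₃} ∩ Metric.closedBall 0 r := by
    apply Set.Subset.antisymm
    · rintro z ⟨hz, hzr⟩
      have hzp := (isPole_iff (hp z)).2 hz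
      rcases pole_structure h z with ⟨h1, -⟩ | ⟨-, -, a, ha, hr1, -⟩
      · exact absurd hz (not_lt.2 h1)
      · rcases cr_three ha h1 h2 h3 h12 h13 h23 with rfl | rfl | rfl
        · exact Or.inl (Or.inl ⟨⟨hzp, hr1⟩, hzr⟩)
        · exact Or.inl (Or.inr ⟨⟨hzp, hr1⟩, hzr⟩)
        · exact Or.inr ⟨⟨hzp, hr1⟩, hzr⟩
    · exact Set.union_subset (Set.union_subset (hsub _) (hsub _)) (hsub _)
  have hf := fun ρ => hfin.subset (hsub ρ)
  simp only [setCount]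
  rw [hun, Set.ncard_union_eq (Set.disjoint_union_left.2 ⟨hdis _ _ h13, hdis _ _ h23⟩) ((hf _).union (hf _)) (hf _),
    Set.ncard_union_eq (hdis _ _ h12) (hf _) (hf _)]
  push_cast
  rfl

lemma final_thm (α β : ℂ) (p q : ℂ → ℂ) (h : IsHamSolution α β p q)
    (hT : ∃ C : ℝ, ∀ r : ℝ, 1 ≤ r → nevT p r ≤ C * r ^ 2)
    (nn : ℂ → ℝ)
    (hnn : ∀ ρ : ℂ, ρ ^ 3 = 1 →
      Tendsto (fun r : ℝ => (4 * Real.pi / (Real.sqrt 3 * r ^ 2)) *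
        setCount {z | IsPole p z ∧ HasResidue p z ρ} r) atTop (𝓝 (nn ρ)))
    (ρ₁ ρ₂ ρ₃ : ℂ) (h1 : ρ₁ ^ 3 = 1) (h2 : ρ₂ ^ 3 = 1) (h3 : ρ₃ ^ 3 = 1)
    (h12 : ρ₁ ≠ ρ₂) (h13 : ρ₁ ≠ ρ₃) (h23 : ρ₂ ≠ ρ₃)
    (hαβ : ρ₁ ^ 2 * α - ρ₁ * β + 1 = 0)
    (hbig : nn ρ₁ > (nn ρ₂ + nn ρ₃) / 2) :
    ∀ z : ℂ, AnalyticAt ℂ p z → AnalyticAt ℂ q z →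
      ρ₁ ^ 2 * p z + ρ₁ * q z - z = 0 := by
  intro z hpz hqz
  have hp : ∀ z, MeromorphicAt p z := fun z => h.1 z (Set.mem_univ z)
  obtain ⟨P, Q, hC, hPz, hQz, hco⟩ := core_of h h1 hαβ
  have hzL : z ∉ {z | meromorphicOrderAt p z < 0} := not_lt.2 hpz.meromorphicOrderAt_nonneg
  by_contra hne
  rw [← hPz z hpz, ← hQz z hqz] at hne
  obtain ⟨C, hCT⟩ := hT
  have hcnt := count_three h h1 h2 h3 h12 h13 h23
  have t1 := hnn ρ₁ h1
  have t2 := hnn ρ₂ h2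
  have t3 := hnn ρ₃ h3
  have hpi := Real.pi_pos
  have h3s : 0 < Real.sqrt 3 := by positivity
  obtain ⟨d, hd⟩ : ∃ d, d = nn ρ₁ - (nn ρ₂ + nn ρ₃) / 2 := ⟨_, rfl⟩
  have hd0 : 0 < d := by linarith
  obtain ⟨s, hs⟩ : ∃ s, s = nn ρ₁ + nn ρ₂ + nn ρ₃ := ⟨_, rfl⟩
  have e1 := (((t1.const_mul 2).sub t2).sub t3).eventually (lt_mem_nhds (show d < 2 * nn ρ₁ - nn ρ₂ - nn ρ₃ by linarith))
  have e2 := ((t1.add t2).add t3).eventually (gt_mem_nhds (show nn ρ₁ + nn ρ₂ + nn ρ₃ < |s| + 1 by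
    have := le_abs_self s; linarith))
  obtain ⟨r₀, hr₀⟩ := eventually_atTop.1 ((e1.and e2).and (eventually_ge_atTop 1))
  have hk : ∀ r : ℝ, 1 ≤ r → ∀ x : ℝ, 4 * Real.pi / (Real.sqrt 3 * r ^ 2) * x * (Real.sqrt 3 / (4 * Real.pi) * r ^ 2) = x := by
    intro r hr x
    have : r ≠ 0 := by linarith
    field_simp
  refine hC.core hzL hne (c := d * (Real.sqrt 3 / (4 * Real.pi))) (r₀ := r₀) (K := (|s| + 1) * (Real.sqrt 3 / (4 * Real.pi)))
    (C := |C|) (by positivity) ?_ (by positivity) ?_ (abs_nonneg C) ?_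
  · intro r hr
    obtain ⟨⟨a, -⟩, b⟩ := hr₀ r hr
    rw [hcnt r]
    have hpos : 0 ≤ Real.sqrt 3 / (4 * Real.pi) * r ^ 2 := by positivity
    have := mul_le_mul_of_nonneg_right a.le hpos
    have k1 := hk r b (setCount {z | IsPole p z ∧ HasResidue p z ρ₁} r)
    have k2 := hk r b (setCount {z | IsPole p z ∧ HasResidue p z ρ₂} r)
    have k3 := hk r b (setCount {z | IsPole p z ∧ HasResidue p z ρ₃} r)
    rw [sub_mul, sub_mul, k2, k3, mul_assoc 2, k1] at this
    linarith
  · intro r hr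
    obtain ⟨⟨-, a⟩, b⟩ := hr₀ r hr
    rw [hcnt r]
    have hpos : 0 ≤ Real.sqrt 3 / (4 * Real.pi) * r ^ 2 := by positivity
    have := mul_le_mul_of_nonneg_right a.le hpos
    have k1 := hk r b (setCount {z | IsPole p z ∧ HasResidue p z ρ₁} r)
    have k2 := hk r b (setCount {z | IsPole p z ∧ HasResidue p z ρ₂} r)
    have k3 := hk r b (setCount {z | IsPole p z ∧ HasResidue p z ρ₃} r)
    rw [add_mul, add_mul, k1, k2, k3] at this
    linarith
  · intro r hr
    have hn1 : ‖ρ₁‖ = 1 := by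
      have : ‖ρ₁‖ ^ 3 = 1 := by rw [← norm_pow, h1, norm_one]
      exact (pow_eq_one_iff_of_nonneg (norm_nonneg _) (by norm_num)).1 this
    have hr0 : r ≠ 0 := by linarith
    have e : Real.circleAverage (fun z => Real.posLog ‖P z‖) 0 r = proximity p r := by
      rw [proximity_eq]
      apply Real.circleAverage_congr_codiscreteWithin _ hr0
      filter_upwards [hco (Metric.sphere 0 |r|)] with w hw
      rw [← hw, norm_mul, norm_pow, hn1]; simp
    rw [e]
    have := hCT r hr
    rw [nevT] at this
    have h4 := countingN_nonneg hp hr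
    have h5 : C * r ^ 2 ≤ |C| * r ^ 2 := by gcongr; exact le_abs_self C
    linarith

/-- (Proposition PROP1.) Let `(p, q)` be a transcendental solution of the
Hamiltonian system with `T(r, p) = O(r²)`, such that the normalized pole densities
`𝔫^ρ = lim (4π/(√3 r²)) n(r, Λ^ρ)` exist for all cube roots of unity `ρ`. If
`ρ₁²α − ρ₁β + 1 = 0` and `𝔫^{ρ₁} > (𝔫^{ρ₂} + 𝔫^{ρ₃})/2`, then `ρ₁²p + ρ₁q − z ≡ 0`. -/
theorem stmt_17 (α β : ℂ) (p q : ℂ → ℂ) (h : IsHamSolution α β p q)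
    (htr : ¬ IsRationalFn p)
    (hT : ∃ C : ℝ, ∀ r : ℝ, 1 ≤ r → nevT p r ≤ C * r ^ 2)
    (nn : ℂ → ℝ)
    (hnn : ∀ ρ : ℂ, ρ ^ 3 = 1 →
      Tendsto (fun r : ℝ => (4 * Real.pi / (Real.sqrt 3 * r ^ 2)) *
        setCount {z | IsPole p z ∧ HasResidue p z ρ} r) atTop (𝓝 (nn ρ)))
    (ρ₁ ρ₂ ρ₃ : ℂ) (h1 : ρ₁ ^ 3 = 1) (h2 : ρ₂ ^ 3 = 1) (h3 : ρ₃ ^ 3 = 1)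
    (h12 : ρ₁ ≠ ρ₂) (h13 : ρ₁ ≠ ρ₃) (h23 : ρ₂ ≠ ρ₃)
    (hαβ : ρ₁ ^ 2 * α - ρ₁ * β + 1 = 0)
    (hbig : nn ρ₁ > (nn ρ₂ + nn ρ₃) / 2) :
    ∀ z : ℂ, AnalyticAt ℂ p z → AnalyticAt ℂ q z →
      ρ₁ ^ 2 * p z + ρ₁ * q z - z = 0 := by
  exact final_thm α β p q h hT nn hnn ρ₁ ρ₂ ρ₃ h1 h2 h3 h12 h13 h23 hαβ hbig
end
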